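/- arXiv:alg-geom/9603011 — 11 statements merged into one kernel-verified Lean document; each statement's English description precedes it below -/
import Mathlib

section
/- Let a ≥ -1 be an integer and let f, g ∈ S be homogeneous polynomials of degree a+1 with no common zeros along Y. Then there is a (necessarily unique) S-module homomorphism u from the ideal (x,y) to S/(x,y) satisfying u(x) = f + (x,y) and u(y) = g + (x,y), and the kernel of u is exactly the ideal (x², xy, y², xg − yf), regarded as an S-submodule of (x,y). (This kernel is the saturated homogeneous ideal of a locally Cohen–Macaulay multiplicity-two structure Z on the line Y.) -/
open MvPolynomial

/-- The pair `(f, g)` has no common zeros along the line `Y = {x = y = 0}`: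
at every point `(0,0,c,d)` with `(c,d) ≠ (0,0)`, one of `f`, `g` is nonzero. -/
def NoCommonZerosAlongY {k : Type*} [Field k] (f g : MvPolynomial (Fin 4) k) : Prop :=
  ∀ c d : k, (c, d) ≠ (0, 0) → eval ![0, 0, c, d] f ≠ 0 ∨ eval ![0, 0, c, d] g ≠ 0

section Helpers

variable {k : Type*} [Field k]

/-- Restriction to the line `Y`, viewed as an endomorphism of the polynomial ring. -/
noncomputable def resY (k : Type*) [Field k] :
    MvPolynomial (Fin 4) k →ₐ[k] MvPolynomial (Fin 4) k :=
  aeval ![0, 0, X 2, X 3]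

lemma resY_sub_mem (t : MvPolynomial (Fin 4) k) :
    ∃ a b, t = resY k t + a * X 0 + b * X 1 := by
  have h : (Ideal.Quotient.mkₐ k (Ideal.span {X 0, X 1} : Ideal (MvPolynomial (Fin 4) k))).comp
      (resY k) = Ideal.Quotient.mkₐ k _ := by
    apply MvPolynomial.algHom_ext
    intro i
    have h0 : (X 0 : MvPolynomial (Fin 4) k) ∈
      (Ideal.span {X 0, X 1} : Ideal (MvPolynomial (Fin 4) k)) := Ideal.subset_span (by simp)
    have h1 : (X 1 : MvPolynomial (Fin 4) k) ∈
      (Ideal.span {X 0, X 1} : Ideal (MvPolynomial (Fin 4) k)) := Ideal.subset_span (by simp)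
    have h0' := Ideal.Quotient.eq_zero_iff_mem.2 h0
    have h1' := Ideal.Quotient.eq_zero_iff_mem.2 h1
    fin_cases i <;> simp [resY, h0', h1']
  have h2 := DFunLike.congr_fun h t
  simp only [AlgHom.comp_apply, Ideal.Quotient.mkₐ_eq_mk] at h2
  have h3 := Ideal.Quotient.eq.1 h2.symm
  obtain ⟨a, b, hab⟩ := Ideal.mem_span_pair.1 h3
  exact ⟨a, b, by linear_combination -hab⟩

lemma resY_mem {t : MvPolynomial (Fin 4) k}
    (ht : t ∈ (Ideal.span {X 0, X 1} : Ideal (MvPolynomial (Fin 4) k))) : resY k t = 0 := by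
  obtain ⟨a, b, rfl⟩ := Ideal.mem_span_pair.1 ht
  simp [resY]

lemma eval_resY (v : Fin 4 → k) (t : MvPolynomial (Fin 4) k) :
    eval v (resY k t) = eval ![0, 0, v 2, v 3] t := by
  have h : (aeval v).comp (resY k) = (aeval ![0, 0, v 2, v 3] : _ →ₐ[k] k) := by
    apply MvPolynomial.algHom_ext
    intro i
    fin_cases i <;> simp [resY]
  have := DFunLike.congr_fun h t
  simpa [aeval_eq_eval] using this

lemma pow_mem_resY [IsAlgClosed k] {f g : MvPolynomial (Fin 4) k}
    (hfg : NoCommonZerosAlongY f g) (i : Fin 4) (hi : i = 2 ∨ i = 3) :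
    ∃ n : ℕ, (X i : MvPolynomial (Fin 4) k) ^ n ∈ Ideal.span {resY k f, resY k g} := by
  have : (X i : MvPolynomial (Fin 4) k) ∈ (Ideal.span {resY k f, resY k g}).radical := by
    rw [← vanishingIdeal_zeroLocus_eq_radical (K := k)]
    rw [mem_vanishingIdeal_iff]
    intro v hv
    rw [mem_zeroLocus_iff] at hv
    have hvf := hv (resY k f) (Ideal.subset_span (by simp))
    have hvg := hv (resY k g) (Ideal.subset_span (by simp))
    simp only [aeval_eq_eval] at hvf hvg
    erw [eval_resY] at hvf hvg
    by_contra hne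
    rcases hfg (v 2) (v 3) (by
      rintro h
      rw [Prod.mk.injEq] at h
      apply hne
      rcases hi with rfl | rfl
      · simpa using h.1
      · simpa using h.2) with h | h
    · exact h hvf
    · exact h hvg
  exact this

lemma dvd_pow_of {f g d : MvPolynomial (Fin 4) k} (hf : d ∣ f) (hg : d ∣ g)
    {t : MvPolynomial (Fin 4) k} (ht : t ∈ Ideal.span {f, g}) : d ∣ t := by
  obtain ⟨a, b, rfl⟩ := Ideal.mem_span_pair.1 ht
  exact dvd_add (hf.mul_left _) (hg.mul_left _)

lemma isRelPrime_resY [IsAlgClosed k] {f g : MvPolynomial (Fin 4) k}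
    (hfg : NoCommonZerosAlongY f g) : IsRelPrime (resY k f) (resY k g) := by
  intro d hd1 hd2
  obtain ⟨n, hn⟩ := pow_mem_resY hfg 2 (by simp)
  obtain ⟨m, hm⟩ := pow_mem_resY hfg 3 (by simp)
  have h1 := dvd_pow_of hd1 hd2 hn
  have h2 := dvd_pow_of hd1 hd2 hm
  have h23 : IsRelPrime (X 2 : MvPolynomial (Fin 4) k) (X 3) := by
    have hp : Prime (X 2 : MvPolynomial (Fin 4) k) := MvPolynomial.X_prime
    refine (hp.irreducible.isRelPrime_iff_not_dvd).2 ?_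
    simp [X_dvd_X]
  exact (IsRelPrime.pow h23 : IsRelPrime (X 2 ^ n : MvPolynomial (Fin 4) k) (X 3 ^ m)) h1 h2

lemma syzygy [IsAlgClosed k] {f g : MvPolynomial (Fin 4) k}
    (hfg : NoCommonZerosAlongY f g) (p q : MvPolynomial (Fin 4) k)
    (h : p * resY k f + q * resY k g = 0) : ∃ c, p = c * resY k g ∧ q = - (c * resY k f) := by
  have hr := isRelPrime_resY hfg
  by_cases hg0 : resY k g = 0
  · have hf0 : resY k f ≠ 0 := by
      intro hf0
      obtain ⟨n, hn⟩ := pow_mem_resY hfg 2 (by simp)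
      rw [hf0, hg0] at hn
      simp at hn
    obtain ⟨c, hc⟩ : resY k f ∣ q := hr.dvd_of_dvd_mul_right ⟨-p, by linear_combination h⟩
    refine ⟨-c, ?_, by rw [hc]; ring⟩
    apply mul_right_cancel₀ hf0
    subst hc
    linear_combination h
  · obtain ⟨c, hc⟩ : resY k g ∣ p := hr.symm.dvd_of_dvd_mul_right ⟨-q, by linear_combination h⟩
    refine ⟨c, by rw [hc]; ring, ?_⟩
    apply mul_right_cancel₀ hg0
    subst hc
    linear_combination h

/-- The homomorphism `u`, via partial derivatives. -/
noncomputable def uMap (f g : MvPolynomial (Fin 4) k) :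
    (Ideal.span {X 0, X 1} : Ideal (MvPolynomial (Fin 4) k)) →ₗ[MvPolynomial (Fin 4) k]
        (MvPolynomial (Fin 4) k ⧸ (Ideal.span {X 0, X 1} : Ideal (MvPolynomial (Fin 4) k))) where
  toFun s := Ideal.Quotient.mk _ (pderiv 0 s.1 * f + pderiv 1 s.1 * g)
  map_add' s t := by
    rw [← map_add]
    congr 1
    simp only [Submodule.coe_add, map_add]
    ring
  map_smul' r s := by
    have hs : Ideal.Quotient.mk (Ideal.span {X 0, X 1} : Ideal (MvPolynomial (Fin 4) k)) s.1 = 0 :=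
      Ideal.Quotient.eq_zero_iff_mem.2 s.2
    change _ = Ideal.Quotient.mk _ (r * (pderiv 0 s.1 * f + pderiv 1 s.1 * g))
    simp only [Submodule.coe_smul, smul_eq_mul, Derivation.leibniz, map_add, map_mul, hs]
    ring

lemma uMap_apply (f g p q : MvPolynomial (Fin 4) k) (h) :
    uMap f g ⟨p * X 0 + q * X 1, h⟩ = Ideal.Quotient.mk _ (p * f + q * g) := by
  have h0 : Ideal.Quotient.mk (Ideal.span {X 0, X 1} : Ideal (MvPolynomial (Fin 4) k)) (X 0) = 0 :=
    Ideal.Quotient.eq_zero_iff_mem.2 (Ideal.subset_span (by simp))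
  have h1 : Ideal.Quotient.mk (Ideal.span {X 0, X 1} : Ideal (MvPolynomial (Fin 4) k)) (X 1) = 0 :=
    Ideal.Quotient.eq_zero_iff_mem.2 (Ideal.subset_span (by simp))
  simp [uMap, pderiv_X, h0, h1]

end Helpers

/-- for `a ≥ -1` and `f, g` homogeneous of degree `a+1` with no common
zeros along `Y`, there is a unique `S`-module homomorphism `u : (x,y) → S/(x,y)` with
`u(x) = f̄`, `u(y) = ḡ`, and its kernel is the ideal `(x², xy, y², xg − yf)`. -/
theorem stmt_0 {k : Type*} [Field k] [IsAlgClosed k] (a : ℤ) (ha : -1 ≤ a)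
    (f g : MvPolynomial (Fin 4) k)
    (hf : f.IsHomogeneous (a + 1).toNat) (hg : g.IsHomogeneous (a + 1).toNat)
    (hfg : NoCommonZerosAlongY f g) :
    ∃ u : (Ideal.span {X 0, X 1} : Ideal (MvPolynomial (Fin 4) k)) →ₗ[MvPolynomial (Fin 4) k]
        (MvPolynomial (Fin 4) k ⧸ (Ideal.span {X 0, X 1} : Ideal (MvPolynomial (Fin 4) k))),
      (u ⟨X 0, Ideal.subset_span (by simp)⟩ = Ideal.Quotient.mk _ f ∧
        u ⟨X 1, Ideal.subset_span (by simp)⟩ = Ideal.Quotient.mk _ g) ∧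
      (∀ u' : (Ideal.span {X 0, X 1} : Ideal (MvPolynomial (Fin 4) k)) →ₗ[MvPolynomial (Fin 4) k]
          (MvPolynomial (Fin 4) k ⧸ (Ideal.span {X 0, X 1} : Ideal (MvPolynomial (Fin 4) k))),
        (u' ⟨X 0, Ideal.subset_span (by simp)⟩ = Ideal.Quotient.mk _ f ∧
          u' ⟨X 1, Ideal.subset_span (by simp)⟩ = Ideal.Quotient.mk _ g) → u' = u) ∧
      LinearMap.ker u = Submodule.comap
        (Submodule.subtype (Ideal.span {X 0, X 1} : Ideal (MvPolynomial (Fin 4) k)))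
        (Ideal.span {X 0 ^ 2, X 0 * X 1, X 1 ^ 2, X 0 * g - X 1 * f}) := by
  refine ⟨uMap f g, ⟨?_, ?_⟩, ?_, ?_⟩
  · simp [uMap, pderiv_X]
  · simp [uMap, pderiv_X]
  · rintro u' ⟨h0, h1⟩
    ext ⟨s, hs⟩
    obtain ⟨p, q, rfl⟩ := Ideal.mem_span_pair.1 hs
    rw [uMap_apply]
    have : (⟨p * X 0 + q * X 1, hs⟩ :
        (Ideal.span {X 0, X 1} : Ideal (MvPolynomial (Fin 4) k))) =
        p • ⟨X 0, Ideal.subset_span (by simp)⟩ + q • ⟨X 1, Ideal.subset_span (by simp)⟩ := by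
      ext1
      simp
    rw [this, map_add, map_smul, map_smul, h0, h1]
    rfl
  · ext ⟨s, hs⟩
    rw [LinearMap.mem_ker, Submodule.mem_comap, Submodule.subtype_apply]
    constructor
    · intro hu
      obtain ⟨p, q, rfl⟩ := Ideal.mem_span_pair.1 hs
      rw [uMap_apply] at hu
      have h := resY_mem (Ideal.Quotient.eq_zero_iff_mem.1 hu)
      rw [map_add, map_mul, map_mul] at h
      obtain ⟨c, hc1, hc2⟩ := syzygy hfg _ _ h
      obtain ⟨p1, p2, hp⟩ := resY_sub_mem p
      obtain ⟨q1, q2, hq⟩ := resY_sub_mem q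
      obtain ⟨f1, f2, hf'⟩ := resY_sub_mem f
      obtain ⟨g1, g2, hg'⟩ := resY_sub_mem g
      simp only [Ideal.mem_span_insert, Ideal.mem_span_singleton']
      refine ⟨p1 - c * g1, _, ⟨p2 - c * g2 + q1 + c * f1, _,
        ⟨q2 + c * f2, _, ⟨c, rfl⟩, rfl⟩, rfl⟩, ?_⟩
      rw [hc1] at hp
      rw [hc2] at hq
      linear_combination X 0 * hp + X 1 * hq - c * X 0 * hg' + c * X 1 * hf'
    · intro h
      simp only [Ideal.mem_span_insert, Ideal.mem_span_singleton'] at h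
      obtain ⟨a, _, ⟨b, _, ⟨c, _, ⟨d, rfl⟩, rfl⟩, rfl⟩, rfl⟩ := h
      have e : a * X 0 ^ 2 + (b * (X 0 * X 1) + (c * X 1 ^ 2 + d * (X 0 * g - X 1 * f))) =
        (a * X 0 + b * X 1 + d * g) * X 0 + (c * X 1 - d * f) * X 1 := by ring
      have e2 := Subtype.ext (p := (· ∈ (Ideal.span {X 0, X 1} :
        Ideal (MvPolynomial (Fin 4) k)))) (a1 := ⟨_, hs⟩) (a2 := ⟨_, e ▸ hs⟩) e
      rw [e2, uMap_apply, Ideal.Quotient.eq_zero_iff_mem, Ideal.mem_span_pair]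
      exact ⟨a * f, b * f + c * g, by ring⟩
end

section
/- Let a ≥ -1 be an integer and let f, g ∈ S be homogeneous polynomials of degree a+1 with no common zeros along Y. Then for all sufficiently large n, the k-dimension of the degree-n graded component of S/(x², xy, y², xg − yf) equals 2n + 2 + a. (Equivalently, the double line Z with saturated ideal I_Z = (x², xy, y², xg − yf) is a curve of degree 2 and arithmetic genus −1−a.) -/
open MvPolynomial

/-- The `k`-dimension of the degree-`n` graded piece of `S ⧸ I`, realized as the image of
the space of degree-`n` homogeneous polynomials in the quotient. -/
noncomputable def gradedPieceDim (k : Type*) [Field k] (I : Ideal (MvPolynomial (Fin 4) k))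
    (n : ℕ) : ℕ :=
  Module.finrank k
    ((homogeneousSubmodule (Fin 4) k n).map (Ideal.Quotient.mkₐ k I).toLinearMap)

namespace DoubleLine

variable {k : Type*} [Field k]

attribute [local instance] MvPolynomial.gradedAlgebra

/-- Restriction to the line `Y`. -/
noncomputable def res : MvPolynomial (Fin 4) k →ₐ[k] MvPolynomial (Fin 2) k :=
  aeval ![0, 0, X 0, X 1]

/-- Inclusion of the coordinate ring of `Y`. -/
noncomputable def inc : MvPolynomial (Fin 2) k →ₐ[k] MvPolynomial (Fin 4) k :=
  aeval ![X 2, X 3]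

lemma res_X0 : res (X 0 : MvPolynomial (Fin 4) k) = 0 := by simp [res]
lemma res_X1 : res (X 1 : MvPolynomial (Fin 4) k) = 0 := by simp [res]
lemma res_X2 : res (X 2 : MvPolynomial (Fin 4) k) = X 0 := by simp [res]
lemma res_X3 : res (X 3 : MvPolynomial (Fin 4) k) = X 1 := by simp [res]

lemma res_inc (p : MvPolynomial (Fin 2) k) : res (inc p) = p := by
  have h : (res.comp inc : MvPolynomial (Fin 2) k →ₐ[k] _) = AlgHom.id k _ := by
    apply MvPolynomial.algHom_ext
    intro i
    fin_cases i <;> simp [res, inc]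
  exact DFunLike.congr_fun h p

lemma pderiv_inc (i : Fin 4) (hi : i = 0 ∨ i = 1) (p : MvPolynomial (Fin 2) k) :
    pderiv i (inc p) = 0 := by
  induction p using MvPolynomial.induction_on with
  | C a => simp [inc, algebraMap_eq]
  | add p q hp hq => simp [hp, hq]
  | mul_X p j hp =>
    rw [map_mul, pderiv_mul, hp]
    rcases hi with rfl | rfl <;> fin_cases j <;> simp [inc, pderiv_X, Pi.single_apply]

lemma res_isHomogeneous {p : MvPolynomial (Fin 4) k} {n : ℕ} (hp : p.IsHomogeneous n) :
    (res p).IsHomogeneous n := by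
  have := hp.aeval (![0, 0, X 0, X 1] : Fin 4 → MvPolynomial (Fin 2) k) (n := 1) (by
    intro i
    fin_cases i
    · exact isHomogeneous_zero _ _ _
    · exact isHomogeneous_zero _ _ _
    · exact isHomogeneous_X _ _
    · exact isHomogeneous_X _ _)
  rwa [one_mul] at this

lemma inc_isHomogeneous {p : MvPolynomial (Fin 2) k} {n : ℕ} (hp : p.IsHomogeneous n) :
    (inc p).IsHomogeneous n := by
  have := hp.aeval (![X 2, X 3] : Fin 2 → MvPolynomial (Fin 4) k) (n := 1) (by
    intro i
    fin_cases i
    · exact isHomogeneous_X _ _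
    · exact isHomogeneous_X _ _)
  rwa [one_mul] at this

lemma finrank_homog (n : ℕ) :
    Module.finrank k (homogeneousSubmodule (Fin 2) k n) = n + 1 := by
  rw [homogeneousSubmodule_eq_finsupp_supported]
  have e : {d : Fin 2 →₀ ℕ | d.degree = n} ≃ Finset.HasAntidiagonal.antidiagonal n :=
    { toFun := fun d => ⟨(d.1 0, d.1 1), by
        have := d.2
        simp only [Set.mem_setOf_eq, Finsupp.degree_eq_sum, Fin.sum_univ_two] at this
        simpa using this⟩
      invFun := fun q => ⟨Finsupp.equivFunOnFinite.symm ![q.1.1, q.1.2], by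
        have := q.2
        rw [Finset.HasAntidiagonal.mem_antidiagonal] at this
        simpa [Finsupp.degree_eq_sum, Fin.sum_univ_two] using this⟩
      left_inv := by
        intro d
        ext i
        fin_cases i <;> simp
      right_inv := by
        intro q
        simp }
  rw [(AddMonoidAlgebra.supportedEquivFinsupp {d : Fin 2 →₀ ℕ | d.degree = n}).finrank_eq,
    (Finsupp.domLCongr e).finrank_eq, Module.finrank_finsupp_self]
  simp

instance (n : ℕ) : Module.Finite k (homogeneousSubmodule (Fin 2) k n) :=
  Module.finite_of_finrank_pos (by rw [finrank_homog]; omega)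

/-- Every polynomial agrees with its first-order expansion modulo `(x,y)²`. -/
lemma expansion (I : Ideal (MvPolynomial (Fin 4) k)) (h0 : X 0 ^ 2 ∈ I) (h1 : X 0 * X 1 ∈ I)
    (h2 : X 1 ^ 2 ∈ I) (p : MvPolynomial (Fin 4) k) :
    p - (inc (res p) + X 0 * inc (res (pderiv 0 p)) + X 1 * inc (res (pderiv 1 p))) ∈ I := by
  induction p using MvPolynomial.induction_on with
  | C a => simp [inc, res, algebraMap_eq]
  | add p q hp hq =>
    convert I.add_mem hp hq using 1
    simp only [map_add]; ring
  | mul_X p j hp =>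
    fin_cases j
    · convert I.add_mem (I.mul_mem_right (X 0) hp) (I.add_mem
        (I.mul_mem_right (inc (res (pderiv 0 p))) h0)
        (I.mul_mem_right (inc (res (pderiv 1 p))) h1)) using 1
      simp [pderiv_mul, res_X0]
      ring
    · convert I.add_mem (I.mul_mem_right (X 1) hp) (I.add_mem
        (I.mul_mem_right (inc (res (pderiv 0 p))) h1)
        (I.mul_mem_right (inc (res (pderiv 1 p))) h2)) using 1
      simp [pderiv_mul, res_X1]
      ring
    · convert I.mul_mem_right (X 2) hp using 1
      simp [pderiv_mul, pderiv_X, res_X2]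
      simp [inc]
      ring
    · convert I.mul_mem_right (X 3) hp using 1
      simp [pderiv_mul, pderiv_X, res_X3]
      simp [inc]
      ring

lemma mem_ideal {f g p : MvPolynomial (Fin 4) k}
    (hp : p ∈ Ideal.span {X 0 ^ 2, X 0 * X 1, X 1 ^ 2, X 0 * g - X 1 * f}) :
    res p = 0 ∧ ∃ h, res (pderiv 0 p) = h * res g ∧ res (pderiv 1 p) = - (h * res f) := by
  simp only [Ideal.mem_span_insert, Ideal.mem_span_singleton'] at hp
  obtain ⟨c0, _, ⟨c1, _, ⟨c2, _, ⟨c3, rfl⟩, rfl⟩, rfl⟩, rfl⟩ := hp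
  refine ⟨by simp [res_X0, res_X1], res c3, ?_, ?_⟩ <;>
  simp [pderiv_mul, pderiv_pow, pderiv_X, res_X0, res_X1]

/-- If `h * q` is homogeneous, `h` may be replaced by its homogeneous component. -/
lemma comp_mul {h q : MvPolynomial (Fin 2) k} {i m : ℕ} (hq : q.IsHomogeneous m)
    (hh : (h * q).IsHomogeneous (i + m)) : homogeneousComponent i h * q = h * q := by
  have := DirectSum.coe_decompose_mul_add_of_right_mem (homogeneousSubmodule (Fin 2) k)
    (i := i) (j := m) (a := h) (b := q) hq
  rw [DirectSum.decompose_of_mem_same _ hh] at this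
  rw [this]
  congr 1
  exact (decomposition.decompose'_apply h i).symm

/-- The first order parametrization of `S / (x,y)²` in degree `n + 1`, mapped to `S / I`. -/
noncomputable def par (I : Ideal (MvPolynomial (Fin 4) k)) (n : ℕ) :
    (homogeneousSubmodule (Fin 2) k (n + 1) × homogeneousSubmodule (Fin 2) k n ×
      homogeneousSubmodule (Fin 2) k n) →ₗ[k] (MvPolynomial (Fin 4) k ⧸ I) where
  toFun t := Ideal.Quotient.mkₐ k I (inc t.1.1 + X 0 * inc t.2.1.1 + X 1 * inc t.2.2.1)
  map_add' s t := by
    rw [← map_add]; congr 1; simp; ring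
  map_smul' c t := by
    rw [RingHom.id_apply, ← map_smul]; congr 1; simp [smul_add]

lemma range_par (I : Ideal (MvPolynomial (Fin 4) k)) (h0 : X 0 ^ 2 ∈ I) (h1 : X 0 * X 1 ∈ I)
    (h2 : X 1 ^ 2 ∈ I) (n : ℕ) :
    LinearMap.range (par I n) =
      (homogeneousSubmodule (Fin 4) k (n + 1)).map (Ideal.Quotient.mkₐ k I).toLinearMap := by
  apply le_antisymm
  · rintro _ ⟨⟨u, v, w⟩, rfl⟩
    refine ⟨_, ?_, rfl⟩
    have hx (i : Fin 4) (v : homogeneousSubmodule (Fin 2) k n) :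
        (X i * inc v.1 : MvPolynomial (Fin 4) k).IsHomogeneous (n + 1) := by
      rw [add_comm]
      exact (isHomogeneous_X _ _).mul (inc_isHomogeneous v.2)
    exact ((inc_isHomogeneous u.2).add (hx 0 v)).add (hx 1 w)
  · rintro _ ⟨p, hp, rfl⟩
    have hp' : p.IsHomogeneous (n + 1) := hp
    refine ⟨⟨⟨res p, res_isHomogeneous hp'⟩, ⟨res (pderiv 0 p), res_isHomogeneous hp'.pderiv⟩,
      ⟨res (pderiv 1 p), res_isHomogeneous hp'.pderiv⟩⟩, ?_⟩
    exact ((Ideal.Quotient.mk_eq_mk_iff_sub_mem _ _).2 (expansion I h0 h1 h2 p)).symm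

/-- The relations in degree `i + m + 1`. -/
noncomputable def rel (f0 g0 : MvPolynomial (Fin 2) k) (i m : ℕ) (hf : f0.IsHomogeneous m)
    (hg : g0.IsHomogeneous m) : homogeneousSubmodule (Fin 2) k i →ₗ[k]
    (homogeneousSubmodule (Fin 2) k (i + m + 1) × homogeneousSubmodule (Fin 2) k (i + m) ×
      homogeneousSubmodule (Fin 2) k (i + m)) where
  toFun h := ⟨0, ⟨h.1 * g0, h.2.mul hg⟩, ⟨-(h.1 * f0), (h.2.mul hf).neg⟩⟩
  map_add' s t := by
    ext1
    · simp
    · ext1 <;> apply Subtype.ext <;> simp <;> ring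
  map_smul' c t := by
    ext1
    · simp
    · ext1 <;> apply Subtype.ext <;> simp

lemma ker_par (f g : MvPolynomial (Fin 4) k) (i m : ℕ) (hf : f.IsHomogeneous m)
    (hg : g.IsHomogeneous m) :
    LinearMap.ker (par (Ideal.span {X 0 ^ 2, X 0 * X 1, X 1 ^ 2, X 0 * g - X 1 * f}) (i + m)) =
    LinearMap.range (rel (res f) (res g) i m (res_isHomogeneous hf) (res_isHomogeneous hg)) := by
  set I : Ideal (MvPolynomial (Fin 4) k) :=
    Ideal.span {X 0 ^ 2, X 0 * X 1, X 1 ^ 2, X 0 * g - X 1 * f} with hI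
  have h0 : X 0 ^ 2 ∈ I := Ideal.subset_span (by simp)
  have h1 : X 0 * X 1 ∈ I := Ideal.subset_span (by simp)
  have h2 : X 1 ^ 2 ∈ I := Ideal.subset_span (by simp)
  have h3 : X 0 * g - X 1 * f ∈ I := Ideal.subset_span (by simp)
  apply le_antisymm
  · rintro ⟨u, v, w⟩ ht
    have ht' : inc u.1 + X 0 * inc v.1 + X 1 * inc w.1 ∈ I :=
      Ideal.Quotient.eq_zero_iff_mem.1 ht
    obtain ⟨hu, h, hv, hw⟩ := mem_ideal ht'
    simp [res_X0, res_X1, res_inc] at hu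
    simp [pderiv_mul, pderiv_X, pderiv_inc, res_inc] at hv hw
    have hvh : (h * res g).IsHomogeneous (i + m) := hv ▸ v.2
    have hwh : (h * res f).IsHomogeneous (i + m) := by
      have := (show w.1.IsHomogeneous (i + m) from w.2).neg
      rwa [hw, neg_neg] at this
    refine ⟨⟨homogeneousComponent i h, homogeneousComponent_isHomogeneous _ _⟩, ?_⟩
    refine Prod.ext (Subtype.ext ?_) (Prod.ext (Subtype.ext ?_) (Subtype.ext ?_))
    · simp [rel, hu]
    · simp [rel, comp_mul (res_isHomogeneous hg) hvh, hv]
    · simp [rel, comp_mul (res_isHomogeneous hf) hwh, hw]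
  · rintro _ ⟨h, rfl⟩
    rw [LinearMap.mem_ker]
    apply Ideal.Quotient.eq_zero_iff_mem.2
    have := expansion I h0 h1 h2 (inc h.1 * (X 0 * g - X 1 * f))
    have h4 := I.sub_mem (I.mul_mem_left (inc h.1) h3) this
    convert h4 using 1
    simp [rel, pderiv_mul, pderiv_X, res_inc, res_X0, res_X1, pderiv_inc]

lemma rel_injective (f0 g0 : MvPolynomial (Fin 2) k) (i m : ℕ) (hf : f0.IsHomogeneous m)
    (hg : g0.IsHomogeneous m) (h : f0 ≠ 0 ∨ g0 ≠ 0) :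
    Function.Injective (rel f0 g0 i m hf hg) := by
  rw [← LinearMap.ker_eq_bot, LinearMap.ker_eq_bot']
  intro p hp
  have hv := congrArg (fun t => t.2.1.1) hp
  have hw := congrArg (fun t => t.2.2.1) hp
  simp [rel] at hv hw
  rcases h with h | h
  · simpa [h] using hw
  · simpa [h] using hv

lemma eval_res (p : MvPolynomial (Fin 4) k) :
    eval ![0, 0, 1, 0] p = eval ![1, 0] (res p) := by
  induction p using MvPolynomial.induction_on with
  | C a => simp [res, algebraMap_eq]
  | add p q hp hq => simp [hp, hq]
  | mul_X p j hp =>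
    rw [map_mul, map_mul, map_mul, hp]
    fin_cases j <;> simp [res]

end DoubleLine

open DoubleLine in
/-- the double line `Z` with ideal `(x², xy, y², xg − yf)` has Hilbert
polynomial `2n + 2 + a`, i.e. it is a curve of degree `2` and arithmetic genus `−1−a`. -/
theorem stmt_1 {k : Type*} [Field k] [IsAlgClosed k] (a : ℤ) (ha : -1 ≤ a)
    (f g : MvPolynomial (Fin 4) k)
    (hf : f.IsHomogeneous (a + 1).toNat) (hg : g.IsHomogeneous (a + 1).toNat)
    (hfg : NoCommonZerosAlongY f g) :
    ∃ N : ℕ, ∀ n : ℕ, N ≤ n →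
      (gradedPieceDim k (Ideal.span {X 0 ^ 2, X 0 * X 1, X 1 ^ 2, X 0 * g - X 1 * f}) n : ℤ)
        = 2 * n + 2 + a := by
  obtain ⟨m, rfl⟩ : ∃ m : ℕ, a = m - 1 := ⟨(a + 1).toNat, by omega⟩
  have hm : ((m : ℤ) - 1 + 1).toNat = m := by omega
  rw [hm] at hf hg
  refine ⟨m + 1, fun n hn => ?_⟩
  obtain ⟨i, rfl⟩ : ∃ i, n = i + m + 1 := ⟨n - (m + 1), by omega⟩
  have hne : res f ≠ 0 ∨ res g ≠ 0 := by
    have := hfg 1 0 (by simp)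
    rw [eval_res, eval_res] at this
    rcases this with h | h
    · left; intro h'; simp [h'] at h
    · right; intro h'; simp [h'] at h
  unfold gradedPieceDim
  rw [← range_par _ (Ideal.subset_span (by simp)) (Ideal.subset_span (by simp))
    (Ideal.subset_span (by simp))]
  have key := LinearMap.finrank_range_add_finrank_ker
    (par (Ideal.span {X 0 ^ 2, X 0 * X 1, X 1 ^ 2, X 0 * g - X 1 * f}) (i + m))
  rw [ker_par f g i m hf hg, LinearMap.finrank_range_of_inj (rel_injective _ _ _ _ _ _ hne),
    Module.finrank_prod, Module.finrank_prod, finrank_homog, finrank_homog, finrank_homog] at key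
  push_cast
  omega
end

section
/- Let a ≥ -1 be an integer and let (f,g) and (f′,g′) be two pairs of homogeneous polynomials of degree a+1, each pair having no common zeros along Y. Then the ideals (x², xy, y², xg − yf) and (x², xy, y², xg′ − yf′) of S are equal if and only if there exists c ∈ k* such that f′ ≡ cf (mod (x,y)) and g′ ≡ cg (mod (x,y)). -/
open MvPolynomial

lemma aux_coeff {k : Type*} [Field k] {n : ℕ} (u f : MvPolynomial (Fin 4) k)
    (hf : f.IsHomogeneous n) (m : Fin 4 →₀ ℕ) (hm : m.degree = n) :
    coeff m (u * f) = coeff m (C (coeff 0 u) * f) := by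
  classical
  rw [coeff_C_mul, coeff_mul]
  rw [Finset.sum_eq_single (0, m)]
  · rintro ⟨p, q⟩ hpq hne
    rw [Finset.HasAntidiagonal.mem_antidiagonal] at hpq
    simp only at hpq
    by_cases hq : coeff q f = 0
    · simp [hq]
    · exfalso
      have hq' : q.degree = n := by
        by_contra h
        exact hq (hf.coeff_eq_zero h)
      have h1 : p.degree + q.degree = m.degree := by rw [← hpq, map_add]
      have h2 : p.degree = 0 := by omega
      have h3 : p = 0 := (Finsupp.degree_eq_zero_iff p).1 h2
      subst h3
      apply hne
      simp at hpq
      simp [hpq]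
  · intro h
    simp at h

lemma aux_mem {k : Type*} [Field k] (p : MvPolynomial (Fin 4) k) :
    p ∈ (Ideal.span {X 0, X 1} : Ideal (MvPolynomial (Fin 4) k)) ↔
      ∀ m ∈ p.support, ∃ i ∈ ({0, 1} : Set (Fin 4)), m i ≠ 0 := by
  rw [← mem_ideal_span_X_image, Set.image_pair]

lemma aux_hom {k : Type*} [Field k] {n : ℕ} (u f f' : MvPolynomial (Fin 4) k)
    (hf : f.IsHomogeneous n) (hf' : f'.IsHomogeneous n)
    (h : f' - u * f ∈ (Ideal.span {X 0, X 1} : Ideal (MvPolynomial (Fin 4) k))) :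
    f' - C (coeff 0 u) * f ∈ (Ideal.span {X 0, X 1} : Ideal (MvPolynomial (Fin 4) k)) := by
  rw [aux_mem] at h ⊢
  intro m hm
  apply h
  rw [mem_support_iff] at hm ⊢
  have hd : m.degree = n := by
    by_contra hne
    apply hm
    rw [coeff_sub, coeff_C_mul, hf.coeff_eq_zero hne, hf'.coeff_eq_zero hne]
    simp
  rw [coeff_sub, aux_coeff u f hf m hd, ← coeff_sub]
  exact hm

lemma aux_eval {k : Type*} [Field k] (p : MvPolynomial (Fin 4) k)
    (h : p ∈ (Ideal.span {X 0, X 1} : Ideal (MvPolynomial (Fin 4) k))) (c d : k) :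
    eval ![0, 0, c, d] p = 0 := by
  obtain ⟨r, s, rfl⟩ := Ideal.mem_span_pair.1 h
  simp

lemma aux_not_dvd {k : Type*} [Field k] {i j : Fin 4} (hij : i ≠ j) :
    ¬ (X i : MvPolynomial (Fin 4) k) ∣ X j := by
  rintro ⟨q, hq⟩
  have := congrArg (eval (Pi.single j (1 : k))) hq
  simp [hij] at this

lemma aux_le {k : Type*} [Field k] (c : k) (hc : c ≠ 0) (f g f' g' : MvPolynomial (Fin 4) k)
    (h1 : f' - C c * f ∈ (Ideal.span {X 0, X 1} : Ideal (MvPolynomial (Fin 4) k)))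
    (h2 : g' - C c * g ∈ (Ideal.span {X 0, X 1} : Ideal (MvPolynomial (Fin 4) k))) :
    (Ideal.span {X 0 ^ 2, X 0 * X 1, X 1 ^ 2, X 0 * g - X 1 * f} : Ideal (MvPolynomial (Fin 4) k))
        = Ideal.span {X 0 ^ 2, X 0 * X 1, X 1 ^ 2, X 0 * g' - X 1 * f'} := by
  obtain ⟨p, q, h1⟩ := Ideal.mem_span_pair.1 h1
  obtain ⟨r, s, h2⟩ := Ideal.mem_span_pair.1 h2
  have hcc : (C c⁻¹ * C c : MvPolynomial (Fin 4) k) = 1 := by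
    rw [← C_mul, inv_mul_cancel₀ hc, C_1]
  apply le_antisymm
  · rw [Ideal.span_le]
    rintro t (rfl | rfl | rfl | rfl)
    · exact Ideal.subset_span (by simp)
    · exact Ideal.subset_span (by simp)
    · exact Ideal.subset_span (by simp)
    · simp only [SetLike.mem_coe, Ideal.mem_span_insert, Ideal.mem_span_singleton']
      refine ⟨-C c⁻¹ * r, _, ⟨C c⁻¹ * (p - s), _, ⟨C c⁻¹ * q, _, ⟨C c⁻¹, rfl⟩, rfl⟩, rfl⟩, ?_⟩
      linear_combination (-(X 0 * g - X 1 * f)) * hcc - C c⁻¹ * X 1 * h1 + C c⁻¹ * X 0 * h2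
  · rw [Ideal.span_le]
    rintro t (rfl | rfl | rfl | rfl)
    · exact Ideal.subset_span (by simp)
    · exact Ideal.subset_span (by simp)
    · exact Ideal.subset_span (by simp)
    · simp only [SetLike.mem_coe, Ideal.mem_span_insert, Ideal.mem_span_singleton']
      refine ⟨r, _, ⟨s - p, _, ⟨-q, _, ⟨C c, rfl⟩, rfl⟩, rfl⟩, ?_⟩
      linear_combination X 1 * h1 - X 0 * h2

/-- two pairs `(f,g)` and `(f′,g′)` of homogeneous polynomials of degree
`a+1`, each with no common zeros along `Y`, define the same double line
`(x², xy, y², xg − yf)` iff they agree up to a nonzero scalar modulo `(x,y)`. -/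
theorem stmt_2 {k : Type*} [Field k] [IsAlgClosed k] (a : ℤ) (ha : -1 ≤ a)
    (f g f' g' : MvPolynomial (Fin 4) k)
    (hf : f.IsHomogeneous (a + 1).toNat) (hg : g.IsHomogeneous (a + 1).toNat)
    (hf' : f'.IsHomogeneous (a + 1).toNat) (hg' : g'.IsHomogeneous (a + 1).toNat)
    (hfg : NoCommonZerosAlongY f g) (hfg' : NoCommonZerosAlongY f' g') :
    (Ideal.span {X 0 ^ 2, X 0 * X 1, X 1 ^ 2, X 0 * g - X 1 * f} : Ideal (MvPolynomial (Fin 4) k))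
        = Ideal.span {X 0 ^ 2, X 0 * X 1, X 1 ^ 2, X 0 * g' - X 1 * f'} ↔
      ∃ c : k, c ≠ 0 ∧ f' - C c * f ∈ (Ideal.span {X 0, X 1} : Ideal (MvPolynomial (Fin 4) k)) ∧
        g' - C c * g ∈ (Ideal.span {X 0, X 1} : Ideal (MvPolynomial (Fin 4) k)) := by
  constructor
  · intro h
    have hm : X 0 * g' - X 1 * f' ∈ (Ideal.span {X 0 ^ 2, X 0 * X 1, X 1 ^ 2, X 0 * g - X 1 * f} :
        Ideal (MvPolynomial (Fin 4) k)) := by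
      rw [h]
      exact Ideal.subset_span (by simp)
    simp only [Ideal.mem_span_insert, Ideal.mem_span_singleton'] at hm
    obtain ⟨A, _, ⟨B, _, ⟨D, _, ⟨u, rfl⟩, rfl⟩, rfl⟩, hm⟩ := hm
    have key : X 0 * (g' - u * g - A * X 0 - B * X 1) = X 1 * (f' - u * f + D * X 1) := by
      linear_combination hm
    have hx : (X 0 : MvPolynomial (Fin 4) k) ∣ f' - u * f + D * X 1 :=
      ((X_prime (i := 0)).dvd_or_dvd ⟨_, key.symm⟩).resolve_left (aux_not_dvd (by decide))
    have hy : (X 1 : MvPolynomial (Fin 4) k) ∣ g' - u * g - A * X 0 - B * X 1 :=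
      ((X_prime (i := 1)).dvd_or_dvd ⟨_, key⟩).resolve_left (aux_not_dvd (by decide))
    obtain ⟨p, hp⟩ := hx
    obtain ⟨q, hq⟩ := hy
    have m1 := aux_hom u f f' hf hf'
      (Ideal.mem_span_pair.2 ⟨p, -D, by linear_combination -hp⟩)
    have m2 := aux_hom u g g' hg hg'
      (Ideal.mem_span_pair.2 ⟨A, q + B, by linear_combination -hq⟩)
    refine ⟨coeff 0 u, ?_, m1, m2⟩
    intro h0
    rw [h0] at m1 m2
    have e1 := aux_eval _ m1 1 0
    have e2 := aux_eval _ m2 1 0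
    simp only [C_0, zero_mul, sub_zero] at e1 e2
    rcases hfg' 1 0 (by simp) with h | h
    · exact h e1
    · exact h e2
  · rintro ⟨c, hc, h1, h2⟩
    exact aux_le c hc f g f' g' h1 h2
end

section
/- Let a ≥ -1 be an integer and let f, g ∈ S be homogeneous polynomials of degree a+1 with no common zeros along Y. Then the module of syzygies of the four generators x², xy, y², xg−yf of the ideal I_Z = (x², xy, y², xg − yf) is generated by the four relations (y, −x, 0, 0), (0, y, −x, 0), (−g, f, 0, x), (0, −g, f, y): that is, every (A,B,C,D) ∈ S⁴ with A·x² + B·xy + C·y² + D·(xg − yf) = 0 is an S-linear combination of these four quadruples. -/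
open MvPolynomial

/-- The substitution `x, y ↦ 0`. -/
noncomputable def phiY (k : Type*) [Field k] :
    MvPolynomial (Fin 4) k →ₐ[k] MvPolynomial (Fin 4) k :=
  aeval ![0, 0, X 2, X 3]

theorem phiY_decomp {k : Type*} [Field k] (p : MvPolynomial (Fin 4) k) :
    ∃ u v, p = phiY k p + u * X 0 + v * X 1 := by
  induction p using MvPolynomial.induction_on with
  | C c => exact ⟨0, 0, by simp [phiY]⟩
  | add p q hp hq =>
    obtain ⟨u, v, h⟩ := hp
    obtain ⟨u', v', h'⟩ := hq
    refine ⟨u + u', v + v', ?_⟩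
    rw [map_add]
    linear_combination h + h'
  | mul_X p i hp =>
    obtain ⟨u, v, h⟩ := hp
    have h0 : phiY k (X 0) = 0 := by simp [phiY]
    have h1 : phiY k (X 1) = 0 := by simp [phiY]
    have h2 : phiY k (X 2) = X 2 := by simp [phiY]
    have h3 : phiY k (X 3) = X 3 := by simp [phiY]
    rw [map_mul]
    fin_cases i
    · exact ⟨p, 0, by simp [h0]⟩
    · exact ⟨0, p, by simp [h1]⟩
    · refine ⟨u * X 2, v * X 2, ?_⟩
      simp only [Fin.reduceFinMk, h2]
      linear_combination X 2 * h
    · refine ⟨u * X 3, v * X 3, ?_⟩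
      simp only [Fin.reduceFinMk, h3]
      linear_combination X 3 * h

theorem eval_phiY {k : Type*} [Field k] (c d : k) (p : MvPolynomial (Fin 4) k) :
    eval ![0, 0, c, d] (phiY k p) = eval ![0, 0, c, d] p := by
  obtain ⟨u, v, h⟩ := phiY_decomp p
  conv_rhs => rw [h]
  simp

/-- Syzygies of the regular sequence `x, y`. -/
theorem koszul_xy {k : Type*} [Field k] {p q : MvPolynomial (Fin 4) k}
    (h : X 0 * p = X 1 * q) : ∃ t, p = X 1 * t ∧ q = X 0 * t := by
  have hd : (X 0 : MvPolynomial (Fin 4) k) ∣ X 1 * q := ⟨p, h.symm⟩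
  rcases (X_prime (R := k) (i := (0 : Fin 4))).dvd_or_dvd hd with h1 | ⟨t, rfl⟩
  · rw [X_dvd_X] at h1
    simp at h1
  · refine ⟨t, ?_, rfl⟩
    apply mul_left_cancel₀ (X_ne_zero (R := k) (0 : Fin 4))
    rw [h]; ring

/-- the syzygies of the four generators `x², xy, y², xg − yf` of `I_Z`
are generated by the four Koszul-type relations
`(y, −x, 0, 0)`, `(0, y, −x, 0)`, `(−g, f, 0, x)`, `(0, −g, f, y)`. -/
theorem stmt_7 {k : Type*} [Field k] [IsAlgClosed k] (a : ℤ) (ha : -1 ≤ a)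
    (f g : MvPolynomial (Fin 4) k)
    (hf : f.IsHomogeneous (a + 1).toNat) (hg : g.IsHomogeneous (a + 1).toNat)
    (hfg : NoCommonZerosAlongY f g) :
    ∀ A B C D : MvPolynomial (Fin 4) k,
      A * X 0 ^ 2 + B * (X 0 * X 1) + C * X 1 ^ 2 + D * (X 0 * g - X 1 * f) = 0 →
      ∃ s₁ s₂ s₃ s₄ : MvPolynomial (Fin 4) k,
        A = s₁ * X 1 - s₃ * g ∧
        B = -(s₁ * X 0) + s₂ * X 1 + s₃ * f - s₄ * g ∧
        C = -(s₂ * X 0) + s₄ * f ∧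
        D = s₃ * X 0 + s₄ * X 1 := by
  intro A B C D h
  obtain ⟨t, ht1, ht2⟩ := koszul_xy (p := A * X 0 + B * X 1 + D * g) (q := D * f - C * X 1)
    (by linear_combination h)
  have h0 : phiY k (X 0) = 0 := by simp [phiY]
  have h1 : phiY k (X 1) = 0 := by simp [phiY]
  have hDf : phiY k D * phiY k f = 0 := by
    have := congrArg (phiY k) ht2
    simpa [h0, h1] using this
  have hDg : phiY k D * phiY k g = 0 := by
    have := congrArg (phiY k) ht1
    simpa [h0, h1] using this
  have hD : phiY k D = 0 := by
    by_contra hne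
    have hf0 := (mul_eq_zero.mp hDf).resolve_left hne
    have hg0 := (mul_eq_zero.mp hDg).resolve_left hne
    rcases hfg 1 0 (by simp) with h' | h'
    · apply h'
      rw [← eval_phiY, hf0, map_zero]
    · apply h'
      rw [← eval_phiY, hg0, map_zero]
  obtain ⟨s₃, s₄, hs⟩ := phiY_decomp D
  rw [hD, zero_add] at hs
  obtain ⟨s₂, h21, h22⟩ := koszul_xy (p := t - s₃ * f) (q := s₄ * f - C)
    (by linear_combination -ht2 + f * hs)
  obtain ⟨s₁, h11, h12⟩ := koszul_xy (p := A + s₃ * g) (q := t - B - s₄ * g)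
    (by linear_combination ht1 - g * hs)
  refine ⟨s₁, s₂, s₃, s₄, ?_, ?_, ?_, hs⟩
  · linear_combination h11
  · linear_combination h21 - h12
  · linear_combination -h22
end

section
/- Let k be an algebraically closed field, R = k[z,w], and a ≥ 0 an integer. Let f, g ∈ R be homogeneous of degree a+1 with no common zeros on k² ∖ {(0,0)}. Then every homogeneous q ∈ R of degree d ≥ 3a+2 can be written q = α·f² + β·fg + γ·g² with α, β, γ ∈ R homogeneous of degree d − 2a − 2. (The map R(−2a−2)³ → R given by (f², fg, g²) is surjective in all degrees ≥ 3(a+1) − 1.) -/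
open MvPolynomial

noncomputable def dehom (k : Type*) [Field k] :
    MvPolynomial (Fin 2) k →ₐ[k] Polynomial k := aeval ![Polynomial.X, 1]

noncomputable def hom {k : Type*} [Field k] (e : ℕ) (P : Polynomial k) :
    MvPolynomial (Fin 2) k :=
  ∑ i ∈ Finset.range (e + 1), C (P.coeff i) * (X 0 ^ i * X 1 ^ (e - i))

lemma hom_isHomogeneous {k : Type*} [Field k] (e : ℕ) (P : Polynomial k) :
    (hom e P).IsHomogeneous e := by
  unfold hom
  apply IsHomogeneous.sum
  intro i hi
  have hi' : i ≤ e := by simpa [Nat.lt_succ_iff] using hi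
  have h1 : ((X 0 : MvPolynomial (Fin 2) k) ^ i * X 1 ^ (e - i)).IsHomogeneous (i + (e - i)) :=
    (isHomogeneous_X_pow _ _).mul (isHomogeneous_X_pow _ _)
  rw [Nat.add_sub_cancel' hi'] at h1
  exact h1.C_mul _

lemma dehom_hom {k : Type*} [Field k] (e : ℕ) (P : Polynomial k) (h : P.natDegree ≤ e) :
    dehom k (hom e P) = P := by
  conv_rhs => rw [P.as_sum_range_C_mul_X_pow' (Nat.lt_succ_of_le h)]
  simp [hom, dehom, Polynomial.C_eq_algebraMap]

lemma eval_dehom {k : Type*} [Field k] (c : k) (f : MvPolynomial (Fin 2) k) :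
    (dehom k f).eval c = eval ![c, 1] f := by
  induction f using MvPolynomial.induction_on with
  | C a => simp [dehom]
  | add p q hp hq => simp [hp, hq]
  | mul_X p i hp =>
    rw [map_mul, Polynomial.eval_mul, hp, map_mul]
    fin_cases i <;> simp [dehom]

lemma eval_smul_homog {k : Type*} [Field k] {e : ℕ} {f : MvPolynomial (Fin 2) k}
    (hf : f.IsHomogeneous e) (t c d : k) :
    eval ![t * c, t * d] f = t ^ e * eval ![c, d] f := by
  rw [eval_eq', eval_eq', Finset.mul_sum]
  refine Finset.sum_congr rfl fun m hm => ?_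
  have h := hf (mem_support_iff.mp hm)
  rw [Finsupp.weight_apply, Finsupp.sum_fintype _ _ (by simp)] at h
  simp at h
  simp [← h]
  ring

lemma dehom_inj {k : Type*} [Field k] [IsAlgClosed k] {e : ℕ} {f g : MvPolynomial (Fin 2) k}
    (hf : f.IsHomogeneous e) (hg : g.IsHomogeneous e) (h : dehom k f = dehom k g) : f = g := by
  have : Infinite k := IsAlgClosed.instInfinite
  have key : f * X 1 = g * X 1 := by
    apply MvPolynomial.funext
    intro x
    by_cases hx : x 1 = 0
    · simp [hx]
    · have hxx : x = ![x 1 * (x 0 / x 1), x 1 * 1] := by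
        ext i
        fin_cases i
        · simp; field_simp
        · simp
      have e1 : eval x f = eval x g := by
        rw [hxx, eval_smul_homog hf, eval_smul_homog hg, ← eval_dehom, ← eval_dehom, h]
      simp [e1]
  exact mul_right_cancel₀ (X_ne_zero 1) key

lemma natDegree_dehom {k : Type*} [Field k] {e : ℕ} {f : MvPolynomial (Fin 2) k}
    (hf : f.IsHomogeneous e) : (dehom k f).natDegree ≤ e := by
  rw [f.as_sum, map_sum]
  apply Polynomial.natDegree_sum_le_of_forall_le
  intro m hm
  have h := hf (mem_support_iff.mp hm)
  rw [Finsupp.weight_apply, Finsupp.sum_fintype _ _ (by simp)] at h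
  simp at h
  have e1 : dehom k (monomial m (coeff m f)) =
      Polynomial.C (coeff m f) * Polynomial.X ^ (m 0) := by
    rw [dehom, aeval_monomial, Finsupp.prod_fintype _ _ (by simp)]
    simp [Polynomial.C_eq_algebraMap]
  rw [e1]
  exact (Polynomial.natDegree_C_mul_X_pow_le _ _).trans (by omega)

lemma natDegree_eq_of_eval {k : Type*} [Field k] [IsAlgClosed k] {a : ℕ}
    {f : MvPolynomial (Fin 2) k}
    (hf : f.IsHomogeneous (a + 1)) (h : eval ![1, 0] f ≠ 0) :
    (dehom k f).natDegree = a + 1 := by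
  by_contra hne
  have hle := natDegree_dehom hf
  have h2 : (dehom k f).natDegree ≤ a := by omega
  have h3 : f = hom a (dehom k f) * X 1 := by
    apply dehom_inj hf ((hom_isHomogeneous a _).mul (isHomogeneous_X k 1))
    rw [map_mul, dehom_hom _ _ h2]
    simp [dehom]
  apply h
  rw [h3]
  simp

lemma uni {k : Type*} [Field k] {n e : ℕ} (hn : 0 < n) (F G Q : Polynomial k)
    (hF : F.natDegree = n) (hG : G.natDegree ≤ n) (hc : IsCoprime F G)
    (he : 2 * n ≤ e + 1) (hQ : Q.natDegree ≤ e) :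
    ∃ U V : Polynomial k, U.natDegree ≤ e - n ∧ V.natDegree ≤ e - n ∧ Q = U * F + V * G := by
  obtain ⟨A, B, hAB⟩ := hc
  have hF0 : F ≠ 0 := by rintro rfl; simp at hF; omega
  have hr : ((Q * B) % F).natDegree < n := by
    rw [← hF]; exact Polynomial.natDegree_mod_lt _ (by omega)
  have hdm := EuclideanDomain.div_add_mod (Q * B) F
  have hQ' : Q = (Q * A + (Q * B) / F * G) * F + ((Q * B) % F) * G := by
    linear_combination (-Q) * hAB - G * hdm
  refine ⟨_, _, ?_, by omega, hQ'⟩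
  generalize (Q * A + (Q * B) / F * G) = U at *
  generalize (Q * B) % F = V at *
  by_cases hU : U = 0
  · simp [hU]
  have h1 : U * F = Q - V * G := by rw [hQ']; ring
  have h2 : (U * F).natDegree ≤ e := by
    rw [h1]
    have h4 : (V * G).natDegree ≤ e := Polynomial.natDegree_mul_le.trans (by omega)
    exact (Polynomial.natDegree_sub_le_of_le hQ h4).trans (by simp)
  rw [Polynomial.natDegree_mul hU hF0] at h2
  omega

lemma key {k : Type*} [Field k] [IsAlgClosed k] (a : ℕ)
    (f g : MvPolynomial (Fin 2) k)
    (hf : f.IsHomogeneous (a + 1)) (hg : g.IsHomogeneous (a + 1))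
    (hfg : ∀ c d : k, (c, d) ≠ (0, 0) → eval ![c, d] f ≠ 0 ∨ eval ![c, d] g ≠ 0)
    (m : ℕ) (hm : a ≤ m) (q : MvPolynomial (Fin 2) k) (hq : q.IsHomogeneous (m + (a + 1))) :
    ∃ u v : MvPolynomial (Fin 2) k, u.IsHomogeneous m ∧ v.IsHomogeneous m ∧
      q = u * f + v * g := by
  have hc : IsCoprime (dehom k f) (dehom k g) := by
    rw [Polynomial.isCoprime_iff_aeval_ne_zero_of_isAlgClosed k k]
    intro c
    simpa [Polynomial.aeval_def, ← Polynomial.eval_eq_sum, eval_dehom] using hfg c 1 (by simp)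
  have hU : ∃ U V : Polynomial k, U.natDegree ≤ m ∧ V.natDegree ≤ m ∧
      dehom k q = U * dehom k f + V * dehom k g := by
    rcases hfg 1 0 (by simp) with h | h
    · obtain ⟨U, V, h1, h2, h3⟩ := uni (n := a + 1) (e := m + (a + 1)) (by omega) _ _ (dehom k q)
        (natDegree_eq_of_eval hf h) (natDegree_dehom hg) hc (by omega) (natDegree_dehom hq)
      exact ⟨U, V, by omega, by omega, h3⟩
    · obtain ⟨U, V, h1, h2, h3⟩ := uni (n := a + 1) (e := m + (a + 1)) (by omega) _ _ (dehom k q)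
        (natDegree_eq_of_eval hg h) (natDegree_dehom hf) hc.symm (by omega) (natDegree_dehom hq)
      exact ⟨V, U, by omega, by omega, by rw [h3, add_comm]⟩
  obtain ⟨U, V, h1, h2, h3⟩ := hU
  refine ⟨hom m U, hom m V, hom_isHomogeneous _ _, hom_isHomogeneous _ _, ?_⟩
  apply dehom_inj hq (((hom_isHomogeneous _ _).mul hf).add ((hom_isHomogeneous _ _).mul hg))
  rw [map_add, map_mul, map_mul, dehom_hom _ _ h1, dehom_hom _ _ h2, h3]

/-- in `R = k[z,w]`, if `f, g` are homogeneous of degree `a+1` with no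
common zeros on `k² ∖ {(0,0)}`, then every homogeneous `q` of degree `d ≥ 3a+2` can be
written `q = α·f² + β·fg + γ·g²` with `α, β, γ` homogeneous of degree `d − 2a − 2`. -/
theorem stmt_9 {k : Type*} [Field k] [IsAlgClosed k] (a : ℕ)
    (f g : MvPolynomial (Fin 2) k)
    (hf : f.IsHomogeneous (a + 1)) (hg : g.IsHomogeneous (a + 1))
    (hfg : ∀ c d : k, (c, d) ≠ (0, 0) → eval ![c, d] f ≠ 0 ∨ eval ![c, d] g ≠ 0) :
    ∀ (d : ℕ), 3 * a + 2 ≤ d → ∀ q : MvPolynomial (Fin 2) k, q.IsHomogeneous d →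
      ∃ α β γ : MvPolynomial (Fin 2) k,
        α.IsHomogeneous (d - (2 * a + 2)) ∧ β.IsHomogeneous (d - (2 * a + 2)) ∧
        γ.IsHomogeneous (d - (2 * a + 2)) ∧
        q = α * f ^ 2 + β * (f * g) + γ * g ^ 2 := by
  intro d hd q hq
  obtain ⟨m, rfl⟩ : ∃ m, d = (m + (a + 1)) + (a + 1) := ⟨d - (2 * a + 2), by omega⟩
  have hm : m + (a + 1) + (a + 1) - (2 * a + 2) = m := by omega
  rw [hm]
  obtain ⟨u, v, hu, hv, rfl⟩ := key a f g hf hg hfg _ (by omega) q hq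
  obtain ⟨u1, v1, hu1, hv1, rfl⟩ := key a f g hf hg hfg m (by omega) u hu
  obtain ⟨u2, v2, hu2, hv2, rfl⟩ := key a f g hf hg hfg m (by omega) v hv
  exact ⟨u1, v1 + u2, v2, hu1, hv1.add hu2, hv2, by ring⟩
end

section
/- Let a, b ≥ 0 be integers. Let f, g ∈ S be homogeneous of degree a+1 with no common zeros along Y, and let p, q ∈ S be homogeneous of degrees b and 3a+b+2 with no common zeros along Y. Let α, β, γ ∈ S be homogeneous polynomials with q ≡ α·f² + β·fg + γ·g² (mod (x,y)). Set I_Z = (x², xy, y², xg − yf). Then there is a (necessarily unique) S-module homomorphism u : I_Z → S/(x,y) with u(x²) = pf² + (x,y), u(xy) = pfg + (x,y), u(y²) = pg² + (x,y), u(xg−yf) = q + (x,y), and the kernel of u is exactly the ideal (x³, x²y, xy², y³, x(xg−yf), y(xg−yf), α·x² + β·xy + γ·y² − p(xg−yf)). (This kernel is the saturated ideal of a quasiprimitive triple line of type (a,b) on Y.) -/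
open MvPolynomial

noncomputable def phi (k : Type*) [Field k] :
    MvPolynomial (Fin 4) k →ₐ[k] MvPolynomial (Fin 2) k :=
  aeval ![0, 0, X 0, X 1]

lemma phi_X0 {k : Type*} [Field k] : phi k (X 0) = 0 := by simp [phi]
lemma phi_X1 {k : Type*} [Field k] : phi k (X 1) = 0 := by simp [phi]
lemma phi_surj {k : Type*} [Field k] (r : MvPolynomial (Fin 2) k) : ∃ s, phi k s = r := by
  refine ⟨rename ![2, 3] r, ?_⟩
  rw [phi, aeval_rename]
  have : (![0, 0, X 0, X 1] ∘ ![2, 3] : Fin 2 → MvPolynomial (Fin 2) k) = X := by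
    funext i; fin_cases i <;> simp
  rw [this]; simp

lemma mem_iff {k : Type*} [Field k] (s : MvPolynomial (Fin 4) k) :
    s ∈ (Ideal.span {X 0, X 1} : Ideal (MvPolynomial (Fin 4) k)) ↔ phi k s = 0 := by
  constructor
  · intro h
    obtain ⟨a, b, rfl⟩ := Ideal.mem_span_pair.1 h
    simp [phi_X0, phi_X1]
  · intro h
    have key : ∀ s : MvPolynomial (Fin 4) k, s - rename ![2, 3] (phi k s) ∈
        (Ideal.span {X 0, X 1} : Ideal (MvPolynomial (Fin 4) k)) := by
      intro s
      rw [← Ideal.Quotient.mk_eq_mk_iff_sub_mem]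
      have : (Ideal.Quotient.mkₐ k (Ideal.span {X 0, X 1} : Ideal (MvPolynomial (Fin 4) k))) =
          (Ideal.Quotient.mkₐ k (Ideal.span {X 0, X 1} : Ideal (MvPolynomial (Fin 4) k))).comp
            ((rename ![2, 3]).comp (phi k)) := by
        apply MvPolynomial.algHom_ext
        intro i
        have h0 : Ideal.Quotient.mk (Ideal.span {X 0, X 1} : Ideal (MvPolynomial (Fin 4) k))
          (X 0) = 0 := Ideal.Quotient.eq_zero_iff_mem.2 (Ideal.subset_span (by simp))
        have h1 : Ideal.Quotient.mk (Ideal.span {X 0, X 1} : Ideal (MvPolynomial (Fin 4) k))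
          (X 1) = 0 := Ideal.Quotient.eq_zero_iff_mem.2 (Ideal.subset_span (by simp))
        fin_cases i <;> simp [phi, h0, h1]
      exact DFunLike.congr_fun this s
    simpa [h] using key s

lemma phi_split {k : Type*} [Field k] {s : MvPolynomial (Fin 4) k} (h : phi k s = 0) :
    ∃ c d, s = c * X 0 + d * X 1 := by
  obtain ⟨a, b, h⟩ := Ideal.mem_span_pair.1 ((mem_iff s).2 h)
  exact ⟨a, b, h.symm⟩

lemma eval_phi {k : Type*} [Field k] (s : MvPolynomial (Fin 4) k) (v : Fin 2 → k) :
    eval v (phi k s) = eval ![0, 0, v 0, v 1] s := by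
  have : (aeval v).comp (phi k) = (aeval ![0, 0, v 0, v 1] : MvPolynomial (Fin 4) k →ₐ[k] k) := by
    apply MvPolynomial.algHom_ext
    intro i
    fin_cases i <;> simp [phi]
  exact DFunLike.congr_fun this s

lemma relprime {k : Type*} [Field k] [IsAlgClosed k] {f g : MvPolynomial (Fin 4) k}
    (h : NoCommonZerosAlongY f g) : IsRelPrime (phi k f) (phi k g) := by
  have hX : ∀ i : Fin 2, ∃ N, (X i : MvPolynomial (Fin 2) k) ^ N ∈
      Ideal.span {phi k f, phi k g} := by
    intro i
    have : (X i : MvPolynomial (Fin 2) k) ∈ (Ideal.span {phi k f, phi k g}).radical := by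
      rw [← vanishingIdeal_zeroLocus_eq_radical (K := k), mem_vanishingIdeal_iff]
      intro v hv
      rw [mem_zeroLocus_iff] at hv
      have h1 := hv _ (Ideal.subset_span (show phi k f ∈ _ by simp))
      have h2 := hv _ (Ideal.subset_span (show phi k g ∈ _ by simp))
      have h1' : eval ![0, 0, v 0, v 1] f = 0 := by rw [← eval_phi]; exact h1
      have h2' : eval ![0, 0, v 0, v 1] g = 0 := by rw [← eval_phi]; exact h2
      by_contra hne
      rcases h (v 0) (v 1) (by
        intro hh
        simp only [Prod.mk.injEq] at hh
        apply hne
        fin_cases i <;> simp [hh.1, hh.2]) with h3 | h3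
      · exact h3 h1'
      · exact h3 h2'
    exact this
  intro d hdf hdg
  have hd : ∀ i : Fin 2, ∃ N, d ∣ (X i : MvPolynomial (Fin 2) k) ^ N := by
    intro i
    obtain ⟨N, hN⟩ := hX i
    obtain ⟨a, b, hab⟩ := Ideal.mem_span_pair.1 hN
    exact ⟨N, hab ▸ dvd_add (hdf.mul_left _) (hdg.mul_left _)⟩
  obtain ⟨N, hN⟩ := hd 0
  obtain ⟨M, hM⟩ := hd 1
  have hp : IsRelPrime ((X 0 : MvPolynomial (Fin 2) k) ^ N) (X 1 ^ M) := by
    apply IsRelPrime.pow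
    rw [(X_prime (R := k) (i := (0 : Fin 2))).irreducible.isRelPrime_iff_not_dvd]
    rw [X_dvd_X]
    simp
  exact hp hN hM

lemma ne_zero_of {k : Type*} [Field k] [IsAlgClosed k] {f g : MvPolynomial (Fin 4) k} {n : ℕ}
    (h : NoCommonZerosAlongY f g) (hg : g.IsHomogeneous (n + 1)) : phi k f ≠ 0 := by
  intro h0
  have hr := relprime h
  rw [h0, isRelPrime_zero_left] at hr
  have hu := hr.map (eval (0 : Fin 2 → k))
  rw [eval_phi] at hu
  have : (![0, 0, (0 : Fin 2 → k) 0, (0 : Fin 2 → k) 1] : Fin 4 → k) = 0 := by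
    funext i; fin_cases i <;> simp
  rw [this] at hu
  have h3 : eval (0 : Fin 4 → k) g = 0 := by
    have h4 : eval (0 : Fin 4 → k) g = coeff 0 g := by
      simp [eval_zero, constantCoeff_eq]
    rw [h4]
    exact hg.coeff_eq_zero (by simp)
  rw [h3] at hu
  exact not_isUnit_zero hu

lemma NoCommonZerosAlongY.symm' {k : Type*} [Field k] {f g : MvPolynomial (Fin 4) k}
    (h : NoCommonZerosAlongY f g) : NoCommonZerosAlongY g f :=
  fun c d hcd => (h c d hcd).symm

lemma X_dvd_of {k : Type*} [Field k] {i j : Fin 4} (hij : i ≠ j) {s : MvPolynomial (Fin 4) k}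
    (h : (X i : MvPolynomial (Fin 4) k) ∣ X j * s) : (X i : MvPolynomial (Fin 4) k) ∣ s := by
  rcases (X_prime (R := k) (i := i)).dvd_or_dvd h with h | h
  · rw [X_dvd_X] at h
    simp_all
  · exact h

lemma welldef {k : Type*} [Field k] {f g p q A B C D : MvPolynomial (Fin 4) k}
    (hg : phi k g ≠ 0)
    (h : A * X 0 ^ 2 + B * (X 0 * X 1) + C * X 1 ^ 2 + D * (X 0 * g - X 1 * f) = 0) :
    phi k (A * (p * f ^ 2) + B * (p * (f * g)) + C * (p * g ^ 2) + D * q) = 0 := by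
  have hD : phi k D = 0 := by
    obtain ⟨t, ht⟩ : (X 1 : MvPolynomial (Fin 4) k) ∣ A * X 0 + B * X 1 + D * g := by
      apply X_dvd_of (j := 0) (by decide)
      exact ⟨- (C * X 1 - D * f), by linear_combination h⟩
    have := congrArg (phi k) ht
    simp only [map_add, map_mul, phi_X0, phi_X1] at this
    simpa [hg] using this
  obtain ⟨c, d, rfl⟩ := phi_split hD
  have h' : (A + c * g) * X 0 ^ 2 + (B + d * g - c * f) * (X 0 * X 1)
      + (C - d * f) * X 1 ^ 2 = 0 := by linear_combination h
  obtain ⟨P, hP⟩ : (X 1 : MvPolynomial (Fin 4) k) ∣ A + c * g := by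
    apply X_dvd_of (j := 0) (by decide)
    apply X_dvd_of (j := 0) (by decide)
    exact ⟨- ((B + d * g - c * f) * X 0 + (C - d * f) * X 1), by linear_combination h'⟩
  obtain ⟨Q, hQ⟩ : (X 0 : MvPolynomial (Fin 4) k) ∣ C - d * f := by
    apply X_dvd_of (j := 1) (by decide)
    apply X_dvd_of (j := 1) (by decide)
    exact ⟨- ((B + d * g - c * f) * X 1 + (A + c * g) * X 0), by linear_combination h'⟩
  have hR : P * X 0 + (B + d * g - c * f) + Q * X 1 = 0 := by
    have h0 : (X 0 * X 1 : MvPolynomial (Fin 4) k) ≠ 0 := mul_ne_zero (X_ne_zero _) (X_ne_zero _)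
    apply mul_left_cancel₀ h0
    rw [hP, hQ] at h'
    linear_combination h'
  have e1 := congrArg (phi k) hP
  have e2 := congrArg (phi k) hQ
  have e3 := congrArg (phi k) hR
  simp only [map_add, map_sub, map_mul, map_zero, phi_X0, phi_X1, map_pow] at e1 e2 e3 ⊢
  linear_combination phi k p * phi k f ^ 2 * e1 + phi k p * phi k g ^ 2 * e2
    + phi k p * phi k f * phi k g * e3

lemma syz {R : Type*} [CommRing R] [IsDomain R] [UniqueFactorizationMonoid R]
    {f g A B C : R} (hfg : IsRelPrime f g) (hg : g ≠ 0) (hf : f ≠ 0)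
    (h : A * f ^ 2 + B * (f * g) + C * g ^ 2 = 0) :
    ∃ s t, A = g * s ∧ B = g * t - f * s ∧ C = - (f * t) := by
  let := UniqueFactorizationMonoid.toGCDMonoid R
  obtain ⟨s, rfl⟩ : g ∣ A := by
    have : g ∣ A * f ^ 2 := ⟨- (B * f + C * g), by linear_combination h⟩
    exact (hfg.symm.pow_right).dvd_of_dvd_mul_right this
  obtain ⟨t, rfl⟩ : f ∣ C := by
    have : f ∣ C * g ^ 2 := ⟨- (g * s * f + B * g), by linear_combination h⟩
    exact (hfg.pow_right).dvd_of_dvd_mul_right this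
  refine ⟨s, -t, rfl, ?_, by ring⟩
  apply mul_left_cancel₀ (mul_ne_zero hf hg)
  linear_combination h

lemma mem4 {R : Type*} [CommRing R] {a b c d m : R} (h : m ∈ Ideal.span {a, b, c, d}) :
    ∃ A B C D, m = A * a + B * b + C * c + D * d := by
  simp only [Ideal.mem_span_insert, Ideal.mem_span_singleton'] at h
  obtain ⟨A, _, ⟨B, _, ⟨C, _, ⟨D, rfl⟩, rfl⟩, rfl⟩, rfl⟩ := h
  exact ⟨A, B, C, D, by ring⟩

lemma mem7 {R : Type*} [CommRing R] {a b c d e f g m : R} :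
    m ∈ Ideal.span {a, b, c, d, e, f, g} ↔
    ∃ A B C D E F G, m = A * a + B * b + C * c + D * d + E * e + F * f + G * g := by
  simp only [Ideal.mem_span_insert, Ideal.mem_span_singleton']
  constructor
  · rintro ⟨A, _, ⟨B, _, ⟨C, _, ⟨D, _, ⟨E, _, ⟨F, _, ⟨G, rfl⟩, rfl⟩, rfl⟩, rfl⟩, rfl⟩, rfl⟩, rfl⟩
    exact ⟨A, B, C, D, E, F, G, by ring⟩
  · rintro ⟨A, B, C, D, E, F, G, rfl⟩
    exact ⟨A, _, ⟨B, _, ⟨C, _, ⟨D, _, ⟨E, _, ⟨F, _, ⟨G, rfl⟩, rfl⟩, rfl⟩, rfl⟩, rfl⟩, rfl⟩, by ring⟩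

set_option maxHeartbeats 2000000 in
/-- for `a, b ≥ 0`, `f, g` homogeneous of degree `a+1` and `p, q`
homogeneous of degrees `b, 3a+b+2`, each pair with no common zeros along `Y`, and
`α, β, γ` homogeneous with `q ≡ αf² + βfg + γg² (mod (x,y))`, there is a unique
`S`-module homomorphism `u : I_Z → S/(x,y)` with `u(x²) = p̄f̄², u(xy) = p̄f̄ḡ,
u(y²) = p̄ḡ², u(xg−yf) = q̄`, and its kernel is exactly
`(x³, x²y, xy², y³, x(xg−yf), y(xg−yf), αx² + βxy + γy² − p(xg−yf))`. -/
theorem stmt_10 {k : Type*} [Field k] [IsAlgClosed k] (a b : ℕ)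
    (f g p q α β γ : MvPolynomial (Fin 4) k)
    (hf : f.IsHomogeneous (a + 1)) (hg : g.IsHomogeneous (a + 1))
    (hp : p.IsHomogeneous b) (hq : q.IsHomogeneous (3 * a + b + 2))
    (hfg : NoCommonZerosAlongY f g) (hpq : NoCommonZerosAlongY p q)
    (dα dβ dγ : ℕ) (hα : α.IsHomogeneous dα) (hβ : β.IsHomogeneous dβ)
    (hγ : γ.IsHomogeneous dγ)
    (hqcong : q - (α * f ^ 2 + β * (f * g) + γ * g ^ 2)
      ∈ (Ideal.span {X 0, X 1} : Ideal (MvPolynomial (Fin 4) k))) :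
    ∃ u : (Ideal.span {X 0 ^ 2, X 0 * X 1, X 1 ^ 2, X 0 * g - X 1 * f} :
          Ideal (MvPolynomial (Fin 4) k)) →ₗ[MvPolynomial (Fin 4) k]
        (MvPolynomial (Fin 4) k ⧸ (Ideal.span {X 0, X 1} : Ideal (MvPolynomial (Fin 4) k))),
      (u ⟨X 0 ^ 2, Ideal.subset_span (by simp)⟩ = Ideal.Quotient.mk _ (p * f ^ 2) ∧
        u ⟨X 0 * X 1, Ideal.subset_span (by simp)⟩ = Ideal.Quotient.mk _ (p * (f * g)) ∧
        u ⟨X 1 ^ 2, Ideal.subset_span (by simp)⟩ = Ideal.Quotient.mk _ (p * g ^ 2) ∧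
        u ⟨X 0 * g - X 1 * f, Ideal.subset_span (by simp)⟩ = Ideal.Quotient.mk _ q) ∧
      (∀ u' : (Ideal.span {X 0 ^ 2, X 0 * X 1, X 1 ^ 2, X 0 * g - X 1 * f} :
            Ideal (MvPolynomial (Fin 4) k)) →ₗ[MvPolynomial (Fin 4) k]
          (MvPolynomial (Fin 4) k ⧸ (Ideal.span {X 0, X 1} : Ideal (MvPolynomial (Fin 4) k))),
        (u' ⟨X 0 ^ 2, Ideal.subset_span (by simp)⟩ = Ideal.Quotient.mk _ (p * f ^ 2) ∧
          u' ⟨X 0 * X 1, Ideal.subset_span (by simp)⟩ = Ideal.Quotient.mk _ (p * (f * g)) ∧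
          u' ⟨X 1 ^ 2, Ideal.subset_span (by simp)⟩ = Ideal.Quotient.mk _ (p * g ^ 2) ∧
          u' ⟨X 0 * g - X 1 * f, Ideal.subset_span (by simp)⟩ = Ideal.Quotient.mk _ q) →
        u' = u) ∧
      LinearMap.ker u = Submodule.comap
        (Submodule.subtype (Ideal.span {X 0 ^ 2, X 0 * X 1, X 1 ^ 2, X 0 * g - X 1 * f} :
          Ideal (MvPolynomial (Fin 4) k)))
        (Ideal.span {X 0 ^ 3, X 0 ^ 2 * X 1, X 0 * X 1 ^ 2, X 1 ^ 3,
          X 0 * (X 0 * g - X 1 * f), X 1 * (X 0 * g - X 1 * f),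
          α * X 0 ^ 2 + β * (X 0 * X 1) + γ * X 1 ^ 2 - p * (X 0 * g - X 1 * f)}) := by
  have hg0 : phi k g ≠ 0 := ne_zero_of hfg.symm' hf
  have hf0 : phi k f ≠ 0 := ne_zero_of hfg hg
  have hp0 : phi k p ≠ 0 := ne_zero_of (n := 3 * a + b + 1) hpq hq
  have hrel := relprime hfg
  have hrel2 := relprime hpq
  have hqc := (mem_iff _).1 hqcong
  simp only [map_sub, map_add, map_mul, map_pow] at hqc
  have hrep : ∀ m : (Ideal.span {X 0 ^ 2, X 0 * X 1, X 1 ^ 2, X 0 * g - X 1 * f} :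
          Ideal (MvPolynomial (Fin 4) k)), ∃ A B C D, (m : MvPolynomial (Fin 4) k) =
      A * X 0 ^ 2 + B * (X 0 * X 1) + C * X 1 ^ 2 + D * (X 0 * g - X 1 * f) :=
    fun m => mem4 m.2
  choose A B C D hm using hrep
  have W : ∀ (m : (Ideal.span {X 0 ^ 2, X 0 * X 1, X 1 ^ 2, X 0 * g - X 1 * f} :
          Ideal (MvPolynomial (Fin 4) k))) (A' B' C' D' : MvPolynomial (Fin 4) k),
      (m : MvPolynomial (Fin 4) k) =
      A' * X 0 ^ 2 + B' * (X 0 * X 1) + C' * X 1 ^ 2 + D' * (X 0 * g - X 1 * f) →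
      Ideal.Quotient.mk (Ideal.span {X 0, X 1} : Ideal (MvPolynomial (Fin 4) k))
        (A m * (p * f ^ 2) + B m * (p * (f * g)) + C m * (p * g ^ 2) + D m * q) =
      Ideal.Quotient.mk (Ideal.span {X 0, X 1} : Ideal (MvPolynomial (Fin 4) k))
        (A' * (p * f ^ 2) + B' * (p * (f * g)) + C' * (p * g ^ 2) + D' * q) := by
    intro m A' B' C' D' h
    rw [Ideal.Quotient.eq, mem_iff]
    have := welldef (f := f) (p := p) (q := q) (A := A m - A') (B := B m - B') (C := C m - C')
      (D := D m - D') hg0 (by linear_combination h - hm m)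
    rw [← this]
    congr 1
    ring
  let u : (Ideal.span {X 0 ^ 2, X 0 * X 1, X 1 ^ 2, X 0 * g - X 1 * f} :
          Ideal (MvPolynomial (Fin 4) k)) →ₗ[MvPolynomial (Fin 4) k]
        (MvPolynomial (Fin 4) k ⧸ (Ideal.span {X 0, X 1} : Ideal (MvPolynomial (Fin 4) k))) :=
    { toFun := fun m => Ideal.Quotient.mk _
        (A m * (p * f ^ 2) + B m * (p * (f * g)) + C m * (p * g ^ 2) + D m * q)
      map_add' := by
        intro m n
        rw [W (m + n) (A m + A n) (B m + B n) (C m + C n) (D m + D n)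
          (by rw [Submodule.coe_add]; linear_combination hm m + hm n), ← map_add]
        congr 1
        ring
      map_smul' := by
        intro c m
        rw [W (c • m) (c * A m) (c * B m) (c * C m) (c * D m)
          (by rw [Submodule.coe_smul, smul_eq_mul]; linear_combination c * hm m)]
        rw [RingHom.id_apply, ← Ideal.Quotient.mk_eq_mk, ← Ideal.Quotient.mk_eq_mk,
          ← Submodule.Quotient.mk_smul, smul_eq_mul]
        congr 1
        ring }
  have hu : ∀ m, u m = Ideal.Quotient.mk _
        (A m * (p * f ^ 2) + B m * (p * (f * g)) + C m * (p * g ^ 2) + D m * q) := fun m => rfl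
  have hval : (u ⟨X 0 ^ 2, Ideal.subset_span (by simp)⟩ = Ideal.Quotient.mk _ (p * f ^ 2) ∧
        u ⟨X 0 * X 1, Ideal.subset_span (by simp)⟩ = Ideal.Quotient.mk _ (p * (f * g)) ∧
        u ⟨X 1 ^ 2, Ideal.subset_span (by simp)⟩ = Ideal.Quotient.mk _ (p * g ^ 2) ∧
        u ⟨X 0 * g - X 1 * f, Ideal.subset_span (by simp)⟩ = Ideal.Quotient.mk _ q) := by
    refine ⟨?_, ?_, ?_, ?_⟩
    · rw [hu, W _ 1 0 0 0 (by ring)]; congr 1; ring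
    · rw [hu, W _ 0 1 0 0 (by ring)]; congr 1; ring
    · rw [hu, W _ 0 0 1 0 (by ring)]; congr 1; ring
    · rw [hu, W _ 0 0 0 1 (by ring)]; congr 1; ring
  refine ⟨u, hval, ?_, ?_⟩
  · rintro u' ⟨h1, h2, h3, h4⟩
    obtain ⟨g1, g2, g3, g4⟩ := hval
    apply LinearMap.ext
    intro m
    have hmm : m = A m • ⟨X 0 ^ 2, Ideal.subset_span (by simp)⟩
        + B m • ⟨X 0 * X 1, Ideal.subset_span (by simp)⟩
        + C m • ⟨X 1 ^ 2, Ideal.subset_span (by simp)⟩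
        + D m • ⟨X 0 * g - X 1 * f, Ideal.subset_span (by simp)⟩ := by
      apply Subtype.ext
      simp only [Submodule.coe_add, Submodule.coe_smul, smul_eq_mul]
      exact hm m
    rw [hmm]
    simp only [map_add, map_smul]
    rw [h1, h2, h3, h4, g1, g2, g3, g4]
  · ext m
    rw [LinearMap.mem_ker, Submodule.mem_comap, Submodule.subtype_apply, mem7]
    constructor
    · intro h
      rw [hu, Ideal.Quotient.eq_zero_iff_mem, mem_iff] at h
      have hmm := hm m
      generalize A m = A at *
      generalize B m = B at *
      generalize C m = C at *
      generalize D m = D at *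
      simp only [map_add, map_mul, map_pow] at h
      let := UniqueFactorizationMonoid.toGCDMonoid (MvPolynomial (Fin 2) k)
      obtain ⟨E', hE⟩ : phi k p ∣ phi k D := by
        have : phi k p ∣ phi k D * phi k q :=
          ⟨- (phi k A * phi k f ^ 2 + phi k B * (phi k f * phi k g) + phi k C * phi k g ^ 2),
            by linear_combination h⟩
        exact hrel2.dvd_of_dvd_mul_right this
      obtain ⟨E, hE2⟩ := phi_surj (-E')
      obtain ⟨s', t', h1, h2, h3⟩ := syz (A := phi k A - phi k E * phi k α)
          (B := phi k B - phi k E * phi k β) (C := phi k C - phi k E * phi k γ) hrel hg0 hf0 (by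
        apply mul_left_cancel₀ hp0
        rw [hE] at h
        rw [hE2]
        linear_combination h - phi k p * E' * hqc)
      obtain ⟨s, rfl⟩ := phi_surj s'
      obtain ⟨t, rfl⟩ := phi_surj t'
      obtain ⟨a1, a2, ha⟩ := phi_split (s := A - E * α - g * s) (by
        simp only [map_sub, map_mul]; linear_combination h1)
      obtain ⟨b1, b2, hb⟩ := phi_split (s := B - E * β - (g * t - f * s)) (by
        simp only [map_sub, map_mul]; linear_combination h2)
      obtain ⟨c1, c2, hc⟩ := phi_split (s := C - E * γ + f * t) (by
        simp only [map_sub, map_add, map_mul]; linear_combination h3)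
      obtain ⟨d1, d2, hd⟩ := phi_split (s := D + E * p) (by
        simp only [map_add, map_mul]; rw [hE, hE2]; ring)
      refine ⟨a1, a2 + b1, b2 + c1, c2, d1 + s, d2 + t, E, ?_⟩
      linear_combination hmm + X 0 ^ 2 * ha + X 0 * X 1 * hb + X 1 ^ 2 * hc
        + (X 0 * g - X 1 * f) * hd
    · rintro ⟨c1, c2, c3, c4, c5, c6, c7, h⟩
      rw [hu, W m (c1 * X 0 + c2 * X 1 + c7 * α) (c7 * β) (c3 * X 0 + c4 * X 1 + c7 * γ)
        (c5 * X 0 + c6 * X 1 - c7 * p) (by linear_combination h),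
        Ideal.Quotient.eq_zero_iff_mem, mem_iff]
      simp only [map_add, map_sub, map_mul, map_pow, phi_X0, phi_X1]
      linear_combination (- phi k c7 * phi k p) * hqc
end

section
/- Let a, b ≥ 0 be integers. Let f, g ∈ S be homogeneous of degree a+1 with no common zeros along Y, let p, q ∈ S be homogeneous of degrees b and 3a+b+2 with no common zeros along Y, and let α, β, γ ∈ S be homogeneous with q ≡ α·f² + β·fg + γ·g² (mod (x,y)). Set I_W = (x³, x²y, xy², y³, x(xg−yf), y(xg−yf), α·x² + β·xy + γ·y² − p(xg−yf)). Then for all sufficiently large n, the k-dimension of the degree-n graded component of S/I_W equals 3n + 3 + 3a + b. (Equivalently, the triple line W of type (a,b) with saturated ideal I_W is a curve of degree 3 and arithmetic genus −2−3a−b.) -/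
open MvPolynomial

namespace TripleLine

variable {k : Type*} [Field k]

theorem finrank_hom2 (n : ℕ) : Module.finrank k (homogeneousSubmodule (Fin 2) k n) = n + 1 := by
  let e : Fin (n+1) → (Fin 2 →₀ ℕ) := fun i => Finsupp.single 0 (i : ℕ) + Finsupp.single 1 (n - i)
  have he : Function.Injective e := by
    intro i j h
    have := DFunLike.congr_fun h 0
    simpa [e, Fin.ext_iff] using this
  have hli : LinearIndependent k (fun i => (monomial (e i) (1:k) : MvPolynomial (Fin 2) k)) := by
    have := (basisMonomials (Fin 2) k).linearIndependent.comp e he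
    simpa [Function.comp_def] using this
  have hs : homogeneousSubmodule (Fin 2) k n
      = Submodule.span k (Set.range fun i => (monomial (e i) (1:k) : MvPolynomial (Fin 2) k)) := by
    apply le_antisymm
    · intro p hp
      rw [← p.support_sum_monomial_coeff]
      refine Submodule.sum_mem _ fun d hd => ?_
      have hdeg : d.degree = n := by
        rw [mem_homogeneousSubmodule] at hp
        have := hp (mem_support_iff.1 hd)
        rw [Finsupp.degree_eq_weight_one]
        exact this
      have hsum : d 0 + d 1 = n := by
        simpa [Finsupp.degree_eq_sum, Fin.sum_univ_two] using hdeg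
      have : monomial d (coeff d p) = coeff d p • monomial (e ⟨d 0, by omega⟩) (1:k) := by
        rw [smul_monomial, smul_eq_mul, mul_one]
        have hd' : d = e ⟨d 0, by omega⟩ := by
          apply Finsupp.ext
          intro i
          fin_cases i
          · simp [e]
          · simp [e]; omega
        rw [← hd']
      rw [this]
      exact Submodule.smul_mem _ _ (Submodule.subset_span ⟨_, rfl⟩)
    · rw [Submodule.span_le]
      rintro _ ⟨i, rfl⟩
      apply isHomogeneous_monomial
      have := i.2
      simp [e, Finsupp.degree_eq_sum, Fin.sum_univ_two]
      omega
  rw [hs, finrank_span_eq_card hli, Fintype.card_fin]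

/-- inclusion of `k[z,w]` -/
noncomputable def io : MvPolynomial (Fin 2) k →ₐ[k] MvPolynomial (Fin 4) k := rename ![2, 3]
/-- restriction to the line -/
noncomputable def pr : MvPolynomial (Fin 4) k →ₐ[k] MvPolynomial (Fin 2) k :=
  aeval ![0, 0, X 0, X 1]

theorem pr_io (r : MvPolynomial (Fin 2) k) : pr (io r) = r := by
  have : (pr.comp io : MvPolynomial (Fin 2) k →ₐ[k] _) = AlgHom.id k _ := by
    ext i; fin_cases i <;> simp [pr, io]
  exact DFunLike.congr_fun this r

theorem pr_hom {F : MvPolynomial (Fin 4) k} {n : ℕ} (h : F.IsHomogeneous n) :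
    (pr F).IsHomogeneous n := by
  have := h.aeval (S := k) (n := 1) (![0, 0, X 0, X 1] : Fin 4 → MvPolynomial (Fin 2) k) (by
    intro i
    fin_cases i
    · exact isHomogeneous_zero _ _ _
    · exact isHomogeneous_zero _ _ _
    · exact isHomogeneous_X _ _
    · exact isHomogeneous_X _ _)
  simpa [pr] using this

theorem eval_pr (F : MvPolynomial (Fin 4) k) (v : Fin 2 → k) :
    eval v (pr F) = eval ![0, 0, v 0, v 1] F := by
  have : ((aeval v : _ →ₐ[k] k).comp pr) = aeval ![0, 0, v 0, v 1] := by
    ext i; fin_cases i <;> simp [pr]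
  exact DFunLike.congr_fun this F

theorem exists_split (F : MvPolynomial (Fin 4) k) :
    ∃ A B, F = io (pr F) + X 0 * A + X 1 * B := by
  induction F using MvPolynomial.induction_on with
  | C a => exact ⟨0, 0, by simp [io, pr]⟩
  | add p q hp hq =>
    obtain ⟨A, B, h⟩ := hp
    obtain ⟨A', B', h'⟩ := hq
    refine ⟨A + A', B + B', ?_⟩
    rw [map_add, map_add]
    linear_combination h + h'
  | mul_X p i hp =>
    obtain ⟨A, B, h⟩ := hp
    fin_cases i
    · exact ⟨p, 0, by simp [pr]; ring⟩
    · exact ⟨0, p, by simp [pr]; ring⟩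
    · refine ⟨A * X 2, B * X 2, ?_⟩
      have : io (pr (X 2)) = (X 2 : MvPolynomial (Fin 4) k) := by simp [pr, io]
      simp only [map_mul]
      change p * X 2 = io (pr p) * io (pr (X 2)) + _ + _
      rw [this]
      linear_combination (X 2) * h
    · refine ⟨A * X 3, B * X 3, ?_⟩
      have : io (pr (X 3)) = (X 3 : MvPolynomial (Fin 4) k) := by simp [pr, io]
      simp only [map_mul]
      change p * X 3 = io (pr p) * io (pr (X 3)) + _ + _
      rw [this]
      linear_combination (X 3) * h

theorem relPrime [IsAlgClosed k] {f g : MvPolynomial (Fin 4) k} (h : NoCommonZerosAlongY f g) :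
    IsRelPrime (pr f) (pr g) := by
  have key : ∀ i : Fin 2, ∃ N : ℕ, (X i : MvPolynomial (Fin 2) k) ^ N ∈
      Ideal.span {pr f, pr g} := by
    intro i
    have : (X i : MvPolynomial (Fin 2) k) ∈ (Ideal.span {pr f, pr g}).radical := by
      rw [← vanishingIdeal_zeroLocus_eq_radical (K := k)]
      intro v hv
      have h1 := hv (pr f) (Ideal.subset_span (by simp))
      have h2 := hv (pr g) (Ideal.subset_span (by simp))
      change eval v (pr f) = 0 at h1
      change eval v (pr g) = 0 at h2
      rw [eval_pr] at h1 h2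
      by_contra hne
      have := h (v 0) (v 1) (by
        intro h0
        simp only [Prod.mk.injEq] at h0
        apply hne
        fin_cases i <;> simp [h0])
      tauto
    exact this
  intro d hdf hdg
  obtain ⟨N, hN⟩ := key 0
  obtain ⟨M, hM⟩ := key 1
  have hd : ∀ F ∈ Ideal.span {pr f, pr g}, d ∣ F := by
    intro F hF
    obtain ⟨u, v, rfl⟩ := Ideal.mem_span_pair.1 hF
    exact dvd_add (hdf.mul_left _) (hdg.mul_left _)
  have h01 : IsRelPrime (X 0 : MvPolynomial (Fin 2) k) (X 1) := by
    rw [(X_prime (i := (0 : Fin 2)) (R := k)).irreducible.isRelPrime_iff_not_dvd, X_dvd_X]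
    simp
  exact (h01.pow (m := N) (n := M)) (hd _ hN) (hd _ hM)

theorem not_unit {F : MvPolynomial (Fin 2) k} {n : ℕ} (h : F.IsHomogeneous n) (hn : n ≠ 0) :
    ¬ IsUnit F := by
  intro hu
  have := (MvPolynomial.isUnit_iff.1 hu).1
  rw [h.coeff_eq_zero (d := 0) (by simpa using hn.symm)] at this
  simp at this

theorem syz {f g A B C : MvPolynomial (Fin 2) k} (h : IsRelPrime f g) (hf : f ≠ 0) (hg : g ≠ 0)
    (e : A * f ^ 2 + B * (f * g) + C * g ^ 2 = 0) :
    ∃ s t, A = s * g ∧ B = - s * f + t * g ∧ C = - t * f := by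
  have h1 : f ∣ C * g ^ 2 := ⟨-(A * f + B * g), by linear_combination e⟩
  obtain ⟨t, rfl⟩ := (h.pow_right (n := 2)).dvd_of_dvd_mul_right h1
  have e2 : A * f + B * g + t * g ^ 2 = 0 := by
    apply mul_left_cancel₀ hf
    linear_combination e
  have h2 : g ∣ A * f := ⟨-(B + t * g), by linear_combination e2⟩
  obtain ⟨s, rfl⟩ := h.symm.dvd_of_dvd_mul_right h2
  refine ⟨s, -t, by ring, ?_, by ring⟩
  apply mul_left_cancel₀ hg
  linear_combination e2

/-- third power of the ideal of the line -/
noncomputable def M3 (k : Type*) [Field k] : Ideal (MvPolynomial (Fin 4) k) :=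
  Ideal.span {X 0 ^ 3, X 0 ^ 2 * X 1, X 0 * X 1 ^ 2, X 1 ^ 3}

theorem mem_M3 {F : MvPolynomial (Fin 4) k} : F ∈ M3 k ↔ ∃ c1 c2 c3 c4,
    F = c1 * X 0 ^ 3 + c2 * (X 0 ^ 2 * X 1) + c3 * (X 0 * X 1 ^ 2) + c4 * X 1 ^ 3 := by
  simp only [M3, Ideal.mem_span_insert, Ideal.mem_span_singleton']
  constructor
  · rintro ⟨c1, _, ⟨c2, _, ⟨c3, _, ⟨c4, rfl⟩, rfl⟩, rfl⟩, rfl⟩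
    exact ⟨c1, c2, c3, c4, by ring⟩
  · rintro ⟨c1, c2, c3, c4, rfl⟩
    exact ⟨c1, _, ⟨c2, _, ⟨c3, _, ⟨c4, rfl⟩, rfl⟩, rfl⟩, by ring⟩

theorem comp_mul {σ : Type*} {n d : ℕ} (c e : MvPolynomial σ k) (he : e.IsHomogeneous d)
    (h : d ≤ n) : homogeneousComponent n (c * e) = homogeneousComponent (n - d) c * e := by
  let _ := MvPolynomial.gradedAlgebra (σ := σ) (R := k)
  have := DirectSum.coe_decompose_mul_of_right_mem_of_le (homogeneousSubmodule σ k) (a := c)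
    (show e ∈ homogeneousSubmodule σ k d from he) h
  rw [← decomposition.decompose'_apply, ← decomposition.decompose'_apply]
  exact this

theorem comp_M3 {n : ℕ} (hn : 3 ≤ n) {F : MvPolynomial (Fin 4) k} (h : F ∈ M3 k) :
    homogeneousComponent n F ∈ M3 k := by
  obtain ⟨c1, c2, c3, c4, rfl⟩ := mem_M3.1 h
  have hx (i : Fin 4) := isHomogeneous_X k i
  simp only [map_add]
  rw [comp_mul c1 _ ((hx 0).pow 3) hn,
    comp_mul c2 _ (by simpa using ((hx 0).pow 2).mul (hx 1)) hn,
    comp_mul c3 _ (by simpa using ((hx 0)).mul ((hx 1).pow 2)) hn,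
    comp_mul c4 _ (by simpa using (hx 1).pow 3) hn]
  exact mem_M3.2 ⟨_, _, _, _, rfl⟩

open Polynomial in
theorem indep6 {r0 r1 r2 r3 r4 r5 : MvPolynomial (Fin 2) k}
    (h : io r0 + io r1 * X 0 + io r2 * X 1 + io r3 * X 0 ^ 2 + io r4 * (X 0 * X 1)
      + io r5 * X 1 ^ 2 ∈ M3 k) :
    r0 = 0 ∧ r1 = 0 ∧ r2 = 0 ∧ r3 = 0 ∧ r4 = 0 ∧ r5 = 0 := by
  let φ : MvPolynomial (Fin 4) k →ₐ[k] (MvPolynomial (Fin 2) k)[X][X] :=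
    MvPolynomial.aeval ![Polynomial.C Polynomial.X, Polynomial.X,
      Polynomial.C (Polynomial.C (MvPolynomial.X 0)), Polynomial.C (Polynomial.C (MvPolynomial.X 1))]
  have h0 : φ (MvPolynomial.X 0) = Polynomial.C Polynomial.X := by simp [φ]
  have h1 : φ (MvPolynomial.X 1) = Polynomial.X := by simp [φ]
  have hi : ∀ r, φ (io r) = Polynomial.C (Polynomial.C r) := by
    intro r
    induction r using MvPolynomial.induction_on with
    | C a => simp [φ, io]
    | add p q hp hq => simp [hp, hq]
    | mul_X p i hp =>
      rw [map_mul, map_mul, hp, Polynomial.C_mul, Polynomial.C_mul]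
      fin_cases i <;> simp [φ, io]
  obtain ⟨c1, c2, c3, c4, e⟩ := mem_M3.1 h
  have e' := congrArg φ e
  simp only [map_add, map_mul, map_pow, hi, h0, h1] at e'
  have co : ∀ i j, _ := fun i j => congrArg (fun P => (P.coeff j).coeff i) e'
  have C00 := co 0 0
  have C10 := co 1 0
  have C01 := co 0 1
  have C20 := co 2 0
  have C11 := co 1 1
  have C02 := co 0 2
  clear co
  simp only [← Polynomial.C_pow, ← mul_assoc, Polynomial.coeff_add, Polynomial.coeff_mul_C,
    Polynomial.coeff_mul_X_pow', Polynomial.coeff_mul_X_zero, Polynomial.coeff_C, Polynomial.coeff_C_mul,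
    Polynomial.coeff_X, Polynomial.coeff_X_pow, Polynomial.coeff_C_mul_X_pow, Polynomial.coeff_mul_X] at C00 C10 C01 C20 C11 C02
  norm_num [Polynomial.coeff_X, Polynomial.coeff_C, Polynomial.coeff_mul_X_pow', Polynomial.coeff_X_pow] at C00 C10 C01 C20 C11 C02
  exact ⟨C00, C10, C01, C20, C11, C02⟩

theorem finrank_map_add_ker {V W : Type*} [AddCommGroup V] [Module k V] [AddCommGroup W]
    [Module k W] (f : V →ₗ[k] W) (U : Submodule k V) [FiniteDimensional k U] :
    Module.finrank k (U.map f) + Module.finrank k (U ⊓ LinearMap.ker f : Submodule k V)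
      = Module.finrank k U := by
  have h := (f.domRestrict U).finrank_range_add_finrank_ker
  rw [LinearMap.range_domRestrict] at h
  have h2 : (LinearMap.ker (f.domRestrict U)).map U.subtype = U ⊓ LinearMap.ker f := by
    ext v
    simp only [Submodule.mem_map, LinearMap.mem_ker, Submodule.mem_inf]
    constructor
    · rintro ⟨w, hw, rfl⟩
      exact ⟨w.2, hw⟩
    · rintro ⟨hv, hw⟩
      exact ⟨⟨v, hv⟩, hw, rfl⟩
  rw [← h2, (Submodule.equivMapOfInjective U.subtype U.injective_subtype _).symm.finrank_eq]
  exact h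

/-- quotient map as a linear map -/
noncomputable abbrev qm (I : Ideal (MvPolynomial (Fin 4) k)) :
    MvPolynomial (Fin 4) k →ₗ[k] (MvPolynomial (Fin 4) k ⧸ I) :=
  (Ideal.Quotient.mkₐ k I).toLinearMap

theorem qm_eq_zero {I : Ideal (MvPolynomial (Fin 4) k)} {F : MvPolynomial (Fin 4) k} :
    qm I F = 0 ↔ F ∈ I := Ideal.Quotient.eq_zero_iff_mem

theorem ker_qm (I : Ideal (MvPolynomial (Fin 4) k)) :
    LinearMap.ker (qm I) = I.restrictScalars k := by
  ext F
  rw [LinearMap.mem_ker, qm_eq_zero, Submodule.restrictScalars_mem]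

theorem dim_formula (I : Ideal (MvPolynomial (Fin 4) k)) (hI : M3 k ≤ I) (n : ℕ) :
    Module.finrank k ((homogeneousSubmodule (Fin 4) k n).map (qm I)) +
    Module.finrank k ((I.restrictScalars k ⊓ homogeneousSubmodule (Fin 4) k n).map (qm (M3 k)))
    = Module.finrank k (((⊤ : Ideal (MvPolynomial (Fin 4) k)).restrictScalars k ⊓
        homogeneousSubmodule (Fin 4) k n).map (qm (M3 k))) := by
  have hfin : FiniteDimensional k (homogeneousSubmodule (Fin 4) k n) :=
    Module.Finite.iff_fg.2 (homogeneousSubmodule_fg (Fin 4) k n)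
  have hfin2 : FiniteDimensional k
      (I.restrictScalars k ⊓ homogeneousSubmodule (Fin 4) k n : Submodule k _) :=
    Submodule.finiteDimensional_of_le inf_le_right
  have h1 := finrank_map_add_ker (qm I) (homogeneousSubmodule (Fin 4) k n)
  have h2 := finrank_map_add_ker (qm (M3 k)) (homogeneousSubmodule (Fin 4) k n)
  have h3 := finrank_map_add_ker (qm (M3 k))
    (I.restrictScalars k ⊓ homogeneousSubmodule (Fin 4) k n)
  rw [ker_qm] at h1 h2 h3
  have h4 : (I.restrictScalars k ⊓ homogeneousSubmodule (Fin 4) k n) ⊓ (M3 k).restrictScalars k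
      = homogeneousSubmodule (Fin 4) k n ⊓ (M3 k).restrictScalars k := by
    ext F
    simp only [Submodule.mem_inf, Submodule.restrictScalars_mem]
    have := @hI F
    tauto
  rw [h4] at h3
  rw [inf_comm] at h1
  rw [Submodule.restrictScalars_top, top_inf_eq]
  omega

theorem count {m : ℕ} (e : Fin m → MvPolynomial (Fin 4) k) (d : Fin m → ℕ)
    (he : ∀ i, (e i).IsHomogeneous (d i)) (n : ℕ) (hn : 3 ≤ n) (hd : ∀ i, d i ≤ n)
    (W : Ideal (MvPolynomial (Fin 4) k))
    (hW1 : ∀ F ∈ W, ∃ r : Fin m → MvPolynomial (Fin 2) k, F - ∑ i, io (r i) * e i ∈ M3 k)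
    (hW2 : ∀ i, e i ∈ W)
    (hc : ∀ r : Fin m → MvPolynomial (Fin 2) k, ∑ i, io (r i) * e i ∈ M3 k → ∀ i, r i = 0) :
    Module.finrank k ((W.restrictScalars k ⊓ homogeneousSubmodule (Fin 4) k n).map (qm (M3 k)))
      = ∑ i, (n - d i + 1) := by
  let T : (∀ i, homogeneousSubmodule (Fin 2) k (n - d i)) →ₗ[k] MvPolynomial (Fin 4) k :=
    ∑ i, (LinearMap.mulRight k (e i)) ∘ₗ (io (k := k)).toLinearMap ∘ₗ
      (Submodule.subtype _) ∘ₗ LinearMap.proj i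
  have hT : ∀ r, T r = ∑ i, io (r i : MvPolynomial (Fin 2) k) * e i := by
    intro r
    simp [T, LinearMap.sum_apply]
  let L := qm (M3 k) ∘ₗ T
  have hinj : Function.Injective L := by
    rw [injective_iff_map_eq_zero]
    intro r hr
    have h0 : T r ∈ M3 k := qm_eq_zero.1 hr
    rw [hT] at h0
    have := hc _ h0
    ext i : 2
    exact this i
  have hrange : LinearMap.range L
      = (W.restrictScalars k ⊓ homogeneousSubmodule (Fin 4) k n).map (qm (M3 k)) := by
    apply le_antisymm
    · rintro _ ⟨r, rfl⟩
      refine ⟨T r, ⟨?_, ?_⟩, rfl⟩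
      · rw [hT]
        exact Ideal.sum_mem _ fun i _ => W.mul_mem_left _ (hW2 i)
      · rw [hT]
        refine Submodule.sum_mem _ fun i _ => ?_
        have h1 : (io (r i : MvPolynomial (Fin 2) k)).IsHomogeneous (n - d i) :=
          IsHomogeneous.rename_isHomogeneous (r i).2
        have h2 := h1.mul (he i)
        rw [Nat.sub_add_cancel (hd i)] at h2
        exact h2
    · rintro _ ⟨F, ⟨hF, hFn⟩, rfl⟩
      obtain ⟨r, hr⟩ := hW1 F hF
      refine ⟨fun i => ⟨homogeneousComponent (n - d i) (r i), homogeneousComponent_mem _ _⟩, ?_⟩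
      have h1 := comp_M3 hn hr
      rw [map_sub, map_sum, homogeneousComponent_eq_self hFn] at h1
      change qm (M3 k) (T _) = qm (M3 k) F
      rw [← sub_eq_zero, ← map_sub, qm_eq_zero, ← neg_mem_iff, neg_sub, hT]
      convert h1 using 4 with i
      rw [comp_mul _ _ (he i) (hd i)]
      congr 1
      exact rename_homogeneousComponent _ _
  have : ∀ i, Module.Finite k (homogeneousSubmodule (Fin 2) k (n - d i)) := fun i =>
    Module.Finite.iff_fg.2 (homogeneousSubmodule_fg (Fin 2) k _)
  rw [← hrange, LinearMap.finrank_range_of_inj hinj, Module.finrank_pi_fintype]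
  simp [finrank_hom2]

theorem dimA (n : ℕ) (hn : 3 ≤ n) :
    Module.finrank k (((⊤ : Ideal (MvPolynomial (Fin 4) k)).restrictScalars k ⊓
        homogeneousSubmodule (Fin 4) k n).map (qm (M3 k))) + 2 = 6 * n := by
  have hx (i : Fin 4) := isHomogeneous_X k i
  have := count (k := k) ![1, X 0, X 1, X 0 ^ 2, X 0 * X 1, X 1 ^ 2] ![0, 1, 1, 2, 2, 2] (by
    intro i
    fin_cases i
    · exact isHomogeneous_one _ _
    · exact hx 0
    · exact hx 1
    · exact (hx 0).pow 2
    · exact (hx 0).mul (hx 1)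
    · exact (hx 1).pow 2) n hn (by intro i; fin_cases i <;> simp <;> omega) ⊤ (by
    intro F _
    obtain ⟨A, B, h⟩ := exists_split F
    obtain ⟨A1, A2, hA⟩ := exists_split A
    obtain ⟨B1, B2, hB⟩ := exists_split B
    obtain ⟨A11, A12, hA1⟩ := exists_split A1
    obtain ⟨B21, B22, hB2⟩ := exists_split B2
    obtain ⟨D1, D2, hD⟩ := exists_split (A2 + B1)
    refine ⟨![pr F, pr A, pr B, pr A1, pr (A2 + B1), pr B2], ?_⟩
    refine mem_M3.2 ⟨A11, A12 + D1, D2 + B21, B22, ?_⟩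
    simp [Fin.sum_univ_succ, -map_add]
    linear_combination h + X 0 * hA + X 1 * hB + X 0 ^ 2 * hA1 + X 1 ^ 2 * hB2 + X 0 * X 1 * hD)
    (by simp) (by
    intro r hr
    have h6 := indep6 (r0 := r 0) (r1 := r 1) (r2 := r 2) (r3 := r 3) (r4 := r 4) (r5 := r 5) (by
      convert hr using 1
      simp [Fin.sum_univ_succ]
      ring_nf)
    obtain ⟨h0, h1, h2, h3, h4, h5⟩ := h6
    intro i; fin_cases i <;> assumption)
  rw [this]
  simp [Fin.sum_univ_succ]
  omega

theorem indep2 {r1 r2 : MvPolynomial (Fin 2) k} {c1 c2 c3 : MvPolynomial (Fin 4) k}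
    (h : io r1 * X 0 + io r2 * X 1 = c1 * X 0 ^ 2 + c2 * (X 0 * X 1) + c3 * X 1 ^ 2) :
    r1 = 0 ∧ r2 = 0 := by
  obtain ⟨A1, B1, h1⟩ := exists_split c1
  obtain ⟨A2, B2, h2⟩ := exists_split c2
  obtain ⟨A3, B3, h3⟩ := exists_split c3
  have := indep6 (r0 := 0) (r1 := r1) (r2 := r2) (r3 := - pr c1) (r4 := - pr c2) (r5 := - pr c3)
    (mem_M3.2 ⟨A1, B1 + A2, B2 + A3, B3, by
      simp only [map_zero, map_neg]
      linear_combination h + X 0 ^ 2 * h1 + X 0 * X 1 * h2 + X 1 ^ 2 * h3⟩)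
  exact ⟨this.2.1, this.2.2.1⟩

/-- the ideal -/
noncomputable def IW (f g p α β γ : MvPolynomial (Fin 4) k) : Ideal (MvPolynomial (Fin 4) k) :=
  Ideal.span {X 0 ^ 3, X 0 ^ 2 * X 1, X 0 * X 1 ^ 2, X 1 ^ 3,
          X 0 * (X 0 * g - X 1 * f), X 1 * (X 0 * g - X 1 * f),
          α * X 0 ^ 2 + β * (X 0 * X 1) + γ * X 1 ^ 2 - p * (X 0 * g - X 1 * f)}

theorem mem_IW {f g p α β γ F : MvPolynomial (Fin 4) k} : F ∈ IW f g p α β γ ↔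
    ∃ c5 c6 c7, F - (c5 * (X 0 * (X 0 * g - X 1 * f)) + c6 * (X 1 * (X 0 * g - X 1 * f)) +
      c7 * (α * X 0 ^ 2 + β * (X 0 * X 1) + γ * X 1 ^ 2 - p * (X 0 * g - X 1 * f))) ∈ M3 k := by
  simp only [IW, mem_M3, Ideal.mem_span_insert, Ideal.mem_span_singleton']
  constructor
  · rintro ⟨c1, _, ⟨c2, _, ⟨c3, _, ⟨c4, _, ⟨c5, _, ⟨c6, _, ⟨c7, rfl⟩, rfl⟩, rfl⟩, rfl⟩, rfl⟩,
      rfl⟩, rfl⟩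
    exact ⟨c5, c6, c7, c1, c2, c3, c4, by ring⟩
  · rintro ⟨c5, c6, c7, c1, c2, c3, c4, h⟩
    exact ⟨c1, _, ⟨c2, _, ⟨c3, _, ⟨c4, _, ⟨c5, _, ⟨c6, _, ⟨c7, rfl⟩, rfl⟩, rfl⟩, rfl⟩, rfl⟩,
      rfl⟩, by linear_combination h⟩

theorem IW_normal {f g p α β γ F : MvPolynomial (Fin 4) k} (h : F ∈ IW f g p α β γ) :
    ∃ u v s : MvPolynomial (Fin 2) k,
     F - (io u * (X 0 * (X 0 * g - X 1 * f)) + io v * (X 1 * (X 0 * g - X 1 * f)) +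
      io s * (α * X 0 ^ 2 + β * (X 0 * X 1) + γ * X 1 ^ 2 - p * (X 0 * g - X 1 * f))) ∈ M3 k := by
  obtain ⟨c5, c6, c7, h⟩ := mem_IW.1 h
  obtain ⟨c1, c2, c3, c4, h⟩ := mem_M3.1 h
  obtain ⟨A7, B7, h7⟩ := exists_split c7
  obtain ⟨A5, B5, h5⟩ := exists_split (c5 - p * A7)
  obtain ⟨A6, B6, h6⟩ := exists_split (c6 - p * B7)
  refine ⟨pr (c5 - p * A7), pr (c6 - p * B7), pr c7, mem_M3.2
    ⟨c1 + A5 * g + A7 * α, c2 + B5 * g - A5 * f + A6 * g + A7 * β + B7 * α,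
     c3 - B5 * f + B6 * g - A6 * f + A7 * γ + B7 * β, c4 - B6 * f + B7 * γ, ?_⟩⟩
  linear_combination h + h5 * (X 0 * (X 0 * g - X 1 * f)) + h6 * (X 1 * (X 0 * g - X 1 * f)) +
    h7 * (α * X 0 ^ 2 + β * (X 0 * X 1) + γ * X 1 ^ 2 - p * (X 0 * g - X 1 * f))

theorem IW_indep {f g p α β γ : MvPolynomial (Fin 4) k} {u v s : MvPolynomial (Fin 2) k}
    (hp : pr p ≠ 0) (hf : pr f ≠ 0) (hg : pr g ≠ 0)
    (h : io u * (X 0 * (X 0 * g - X 1 * f)) + io v * (X 1 * (X 0 * g - X 1 * f)) +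
      io s * (α * X 0 ^ 2 + β * (X 0 * X 1) + γ * X 1 ^ 2 - p * (X 0 * g - X 1 * f)) ∈ M3 k) :
    u = 0 ∧ v = 0 ∧ s = 0 := by
  obtain ⟨c1, c2, c3, c4, h⟩ := mem_M3.1 h
  obtain ⟨P1, P2, hpg⟩ := exists_split (p * g)
  obtain ⟨Q1, Q2, hpf⟩ := exists_split (p * f)
  obtain ⟨G1, G2, hG⟩ := exists_split g
  obtain ⟨F1, F2, hF⟩ := exists_split f
  have hs := (indep2 (r1 := s * pr (p * g)) (r2 := - (s * pr (p * f)))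
    (c1 := io u * g + io s * (α - P1) - c1 * X 0)
    (c2 := - (io u * f) + io v * g + io s * (β - P2 + Q1) - c2 * X 0 - c3 * X 1)
    (c3 := - (io v * f) + io s * (γ + Q2) - c4 * X 1) (by
      rw [map_neg, map_mul io, map_mul io]
      linear_combination -h - io s * X 0 * hpg + io s * X 1 * hpf)).1
  rw [map_mul] at hs
  have hs0 : s = 0 := by simpa [hp, hg] using hs
  subst hs0
  have h2 := indep6 (r0 := 0) (r1 := 0) (r2 := 0) (r3 := u * pr g) (r4 := v * pr g - u * pr f)
    (r5 := - (v * pr f)) (mem_M3.2 ⟨c1 - io u * G1, c2 - io u * G2 - io v * G1 + io u * F1,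
      c3 - io v * G2 + io u * F2 + io v * F1, c4 + io v * F2, by
      simp only [map_zero, map_neg, map_mul, map_sub] at h ⊢
      linear_combination h - (io u * X 0 + io v * X 1) * X 0 * hG +
        (io u * X 0 + io v * X 1) * X 1 * hF⟩)
  refine ⟨?_, ?_, rfl⟩
  · simpa [hg] using h2.2.2.2.1
  · simpa [hf] using h2.2.2.2.2.2

/-- changing the coefficients by a relation does not change the ideal -/
theorem IW_le {f g p α β γ α' β' γ' : MvPolynomial (Fin 4) k}
    (hfg : IsRelPrime (pr f) (pr g)) (hf : pr f ≠ 0) (hg : pr g ≠ 0)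
    (e : pr (α - α') * pr f ^ 2 + pr (β - β') * (pr f * pr g) + pr (γ - γ') * pr g ^ 2 = 0) :
    IW f g p α β γ ≤ IW f g p α' β' γ' := by
  obtain ⟨s, t, h1, h2, h3⟩ := syz hfg hf hg e
  obtain ⟨A1, B1, k1⟩ := exists_split (α - α')
  obtain ⟨A2, B2, k2⟩ := exists_split (β - β')
  obtain ⟨A3, B3, k3⟩ := exists_split (γ - γ')
  obtain ⟨G1, G2, hG⟩ := exists_split g
  obtain ⟨F1, F2, hF⟩ := exists_split f
  rw [h1] at k1
  rw [h2] at k2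
  rw [h3] at k3
  simp only [map_mul, map_add, map_neg] at k1 k2 k3
  intro F hF'
  obtain ⟨c5, c6, c7, h⟩ := mem_IW.1 hF'
  obtain ⟨c1, c2, c3, c4, h⟩ := mem_M3.1 h
  refine mem_IW.2 ⟨c5 + c7 * io s, c6 + c7 * io t, c7, mem_M3.2 
    ⟨c1 + c7 * (A1 - io s * G1), c2 + c7 * (B1 + A2 - io s * G2 + io s * F1 - io t * G1),
    c3 + c7 * (B2 + A3 + io s * F2 - io t * G2 + io t * F1), c4 + c7 * (B3 + io t * F2), ?_⟩⟩
  linear_combination h + c7 * (X 0 ^ 2 * k1 + X 0 * X 1 * k2 + X 1 ^ 2 * k3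
    - (io s * X 0 + io t * X 1) * (X 0 * hG - X 1 * hF))

theorem dimB {f g p α β γ : MvPolynomial (Fin 4) k} {a b : ℕ}
    (hf : f.IsHomogeneous (a + 1)) (hg : g.IsHomogeneous (a + 1)) (hp : p.IsHomogeneous b)
    (hα : α.IsHomogeneous (a + b)) (hβ : β.IsHomogeneous (a + b)) (hγ : γ.IsHomogeneous (a + b))
    (hp0 : pr p ≠ 0) (hf0 : pr f ≠ 0) (hg0 : pr g ≠ 0) (n : ℕ) (hn : a + b + 3 ≤ n) :
    Module.finrank k (((IW f g p α β γ).restrictScalars k ⊓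
        homogeneousSubmodule (Fin 4) k n).map (qm (M3 k))) + (3 * a + b + 5) = 3 * n := by
  have hx (i : Fin 4) := isHomogeneous_X k i
  have hl : (X 0 * g - X 1 * f).IsHomogeneous (a + 2) := by
    have h1 := (hx 0).mul hg
    have h2 := (hx 1).mul hf
    rw [show 1 + (a + 1) = a + 2 by ring] at h1 h2
    exact h1.sub h2
  have := count (k := k) ![X 0 * (X 0 * g - X 1 * f), X 1 * (X 0 * g - X 1 * f),
      α * X 0 ^ 2 + β * (X 0 * X 1) + γ * X 1 ^ 2 - p * (X 0 * g - X 1 * f)]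
    ![a + 3, a + 3, a + b + 2] (by
    intro i
    fin_cases i
    · have := (hx 0).mul hl
      rw [show 1 + (a + 2) = a + 3 by ring] at this
      exact this
    · have := (hx 1).mul hl
      rw [show 1 + (a + 2) = a + 3 by ring] at this
      exact this
    · have h4 := hp.mul hl
      rw [show b + (a + 2) = a + b + 2 by ring] at h4
      exact (((hα.mul ((hx 0).pow 2)).add (hβ.mul ((hx 0).mul (hx 1)))).add
        (hγ.mul ((hx 1).pow 2))).sub h4) n (by omega)
    (by intro i; fin_cases i <;> simp <;> omega) (IW f g p α β γ) (by
    intro F hF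
    obtain ⟨u, v, s, h⟩ := IW_normal hF
    refine ⟨![u, v, s], ?_⟩
    simpa [Fin.sum_univ_succ, add_assoc] using h)
    (by
      intro i
      fin_cases i <;> exact Ideal.subset_span (by simp)) (by
    intro r hr
    have h6 := IW_indep (u := r 0) (v := r 1) (s := r 2) (α := α) (β := β) (γ := γ) hp0 hf0 hg0 (by
      simpa [Fin.sum_univ_succ, add_assoc] using hr)
    obtain ⟨h0, h1, h2⟩ := h6
    intro i; fin_cases i <;> assumption)
  rw [this]
  simp [Fin.sum_univ_succ]
  omega

theorem comp_aux {A B : MvPolynomial (Fin 4) k} {F : MvPolynomial (Fin 2) k} {d m e : ℕ}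
    (hA : A.IsHomogeneous d) (hB : B = homogeneousComponent m A) (hF : F.IsHomogeneous e) :
    homogeneousComponent (m + e) (pr (A - B) * F) = 0 := by
  rw [comp_mul _ _ hF (by omega), Nat.add_sub_cancel]
  subst hB
  rw [homogeneousComponent_of_mem hA]
  split_ifs with h
  · simp
  · rw [sub_zero, homogeneousComponent_of_mem (pr_hom hA), if_neg h, zero_mul]

end TripleLine

/-- the triple line `W` of type `(a,b)` with saturated ideal
`I_W = (x³, x²y, xy², y³, x(xg−yf), y(xg−yf), αx² + βxy + γy² − p(xg−yf))` has Hilbert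
polynomial `3n + 3 + 3a + b`, i.e. it is a curve of degree `3` and genus `−2−3a−b`. -/
theorem stmt_11 {k : Type*} [Field k] [IsAlgClosed k] (a b : ℕ)
    (f g p q α β γ : MvPolynomial (Fin 4) k)
    (hf : f.IsHomogeneous (a + 1)) (hg : g.IsHomogeneous (a + 1))
    (hp : p.IsHomogeneous b) (hq : q.IsHomogeneous (3 * a + b + 2))
    (hfg : NoCommonZerosAlongY f g) (hpq : NoCommonZerosAlongY p q)
    (dα dβ dγ : ℕ) (hα : α.IsHomogeneous dα) (hβ : β.IsHomogeneous dβ)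
    (hγ : γ.IsHomogeneous dγ)
    (hqcong : q - (α * f ^ 2 + β * (f * g) + γ * g ^ 2)
      ∈ (Ideal.span {X 0, X 1} : Ideal (MvPolynomial (Fin 4) k))) :
    ∃ N : ℕ, ∀ n : ℕ, N ≤ n →
      (gradedPieceDim k (Ideal.span {X 0 ^ 3, X 0 ^ 2 * X 1, X 0 * X 1 ^ 2, X 1 ^ 3,
          X 0 * (X 0 * g - X 1 * f), X 1 * (X 0 * g - X 1 * f),
          α * X 0 ^ 2 + β * (X 0 * X 1) + γ * X 1 ^ 2 - p * (X 0 * g - X 1 * f)}) n : ℤ)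
        = 3 * n + 3 + 3 * a + b := by
  have rfg := TripleLine.relPrime hfg
  have rpq := TripleLine.relPrime hpq
  have hf0 : TripleLine.pr f ≠ 0 := by
    intro h0
    rw [h0, isRelPrime_zero_left] at rfg
    exact TripleLine.not_unit (TripleLine.pr_hom hg) (by omega) rfg
  have hg0 : TripleLine.pr g ≠ 0 := by
    intro h0
    rw [h0, isRelPrime_zero_right] at rfg
    exact TripleLine.not_unit (TripleLine.pr_hom hf) (by omega) rfg
  have hp0 : TripleLine.pr p ≠ 0 := by
    intro h0
    rw [h0, isRelPrime_zero_left] at rpq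
    exact TripleLine.not_unit (TripleLine.pr_hom hq) (by omega) rpq
  obtain ⟨α', hα'⟩ : ∃ α', α' = homogeneousComponent (a + b) α := ⟨_, rfl⟩
  obtain ⟨β', hβ'⟩ : ∃ β', β' = homogeneousComponent (a + b) β := ⟨_, rfl⟩
  obtain ⟨γ', hγ'⟩ : ∃ γ', γ' = homogeneousComponent (a + b) γ := ⟨_, rfl⟩
  have hα'h : α'.IsHomogeneous (a + b) := hα' ▸ homogeneousComponent_isHomogeneous _ _
  have hβ'h : β'.IsHomogeneous (a + b) := hβ' ▸ homogeneousComponent_isHomogeneous _ _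
  have hγ'h : γ'.IsHomogeneous (a + b) := hγ' ▸ homogeneousComponent_isHomogeneous _ _
  have hF := TripleLine.pr_hom hf
  have hG := TripleLine.pr_hom hg
  have hF2 : (TripleLine.pr f ^ 2).IsHomogeneous (2 * a + 2) := by
    have := hF.pow 2
    rwa [show (a + 1) * 2 = 2 * a + 2 by ring] at this
  have hG2 : (TripleLine.pr g ^ 2).IsHomogeneous (2 * a + 2) := by
    have := hG.pow 2
    rwa [show (a + 1) * 2 = 2 * a + 2 by ring] at this
  have hFG : (TripleLine.pr f * TripleLine.pr g).IsHomogeneous (2 * a + 2) := by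
    have := hF.mul hG
    rwa [show (a + 1) + (a + 1) = 2 * a + 2 by ring] at this
  have hqe : TripleLine.pr q = TripleLine.pr α * TripleLine.pr f ^ 2 +
      TripleLine.pr β * (TripleLine.pr f * TripleLine.pr g) +
      TripleLine.pr γ * TripleLine.pr g ^ 2 := by
    obtain ⟨A, B, h⟩ := Ideal.mem_span_pair.1 hqcong
    have := congrArg TripleLine.pr h
    have h0 : TripleLine.pr (X 0 : MvPolynomial (Fin 4) k) = 0 := by simp [TripleLine.pr]
    have h1 : TripleLine.pr (X 1 : MvPolynomial (Fin 4) k) = 0 := by simp [TripleLine.pr]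
    simp only [map_add, map_mul, map_sub, map_pow, h0, h1, mul_zero, add_zero] at this
    linear_combination -this
  have e : TripleLine.pr (α - α') * TripleLine.pr f ^ 2 +
      TripleLine.pr (β - β') * (TripleLine.pr f * TripleLine.pr g) +
      TripleLine.pr (γ - γ') * TripleLine.pr g ^ 2 = 0 := by
    have hom : (TripleLine.pr (α - α') * TripleLine.pr f ^ 2 +
      TripleLine.pr (β - β') * (TripleLine.pr f * TripleLine.pr g) +
      TripleLine.pr (γ - γ') * TripleLine.pr g ^ 2).IsHomogeneous ((a + b) + (2 * a + 2)) := by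
      have h1 := TripleLine.pr_hom hq
      rw [show 3 * a + b + 2 = (a + b) + (2 * a + 2) by ring] at h1
      have h2 := h1.sub ((((TripleLine.pr_hom hα'h).mul hF2).add
        ((TripleLine.pr_hom hβ'h).mul hFG)).add ((TripleLine.pr_hom hγ'h).mul hG2))
      rw [hqe] at h2
      simp only [map_sub]
      refine Eq.mp (congrArg (fun P => IsHomogeneous P (a + b + (2 * a + 2))) ?_) h2
      ring
    rw [← homogeneousComponent_eq_self hom, map_add, map_add, TripleLine.comp_aux hα hα' hF2,
      TripleLine.comp_aux hβ hβ' hFG, TripleLine.comp_aux hγ hγ' hG2]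
    simp
  have hI : TripleLine.IW f g p α β γ = TripleLine.IW f g p α' β' γ' := by
    apply le_antisymm
    · exact TripleLine.IW_le rfg hf0 hg0 e
    · apply TripleLine.IW_le rfg hf0 hg0
      simp only [map_sub] at e ⊢
      linear_combination -e
  refine ⟨a + b + 3, fun n hn => ?_⟩
  have hM : TripleLine.M3 k ≤ TripleLine.IW f g p α' β' γ' := by
    intro F hF
    exact TripleLine.mem_IW.2 ⟨0, 0, 0, by simpa using hF⟩
  have d1 := TripleLine.dim_formula _ hM n
  have d2 := TripleLine.dimA (k := k) n (by omega)
  have d3 := TripleLine.dimB hf hg hp hα'h hβ'h hγ'h hp0 hf0 hg0 n hn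
  rw [← hI] at d1 d3
  change ((Module.finrank k ((homogeneousSubmodule (Fin 4) k n).map
    (TripleLine.qm (TripleLine.IW f g p α β γ))) : ℕ) : ℤ) = _
  omega
end

section
/- Let a ≥ 0 be an integer and let f, g ∈ k[z,w] ⊂ S be homogeneous polynomials of degree a+1 in the variables z, w only, with no common zeros along Y. Then, as ideals of S, ((x,y)²·(z,w)) + (xg − yf) = (x², xy, y², xg − yf) ∩ (z,w). (That is, the ideal J = ((x,y)²(z,w), xg−yf) is the saturated total ideal of the disjoint union of the double line Z with ideal (x², xy, y², xg−yf) and the line L = {z = w = 0}.) -/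
open MvPolynomial

lemma aux_mem_zw {k : Type*} [Field k] (a : ℕ) (f : MvPolynomial (Fin 4) k)
    (hfzw : f ∈ supported k ({2, 3} : Set (Fin 4))) (hf : f.IsHomogeneous (a + 1)) :
    f ∈ (Ideal.span {X 2, X 3} : Ideal (MvPolynomial (Fin 4) k)) := by
  have himg : ({X 2, X 3} : Set (MvPolynomial (Fin 4) k)) = Set.image X ({2, 3} : Set (Fin 4)) := by
    simp [Set.image_pair]
  rw [himg, mem_ideal_span_X_image]
  intro m hm
  rw [mem_supported] at hfzw
  have hd := hf (mem_support_iff.mp hm)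
  have hne : m ≠ 0 := by
    rintro rfl
    simp at hd
  obtain ⟨i, hi⟩ := Finsupp.ne_iff.mp hne
  refine ⟨i, hfzw ?_, by simpa using hi⟩
  simp only [Finset.mem_coe, mem_vars_iff_mem_support]
  exact ⟨m, hm, by simpa using hi⟩

lemma aux_sub_mem {k : Type*} [Field k] (p : MvPolynomial (Fin 4) k) :
    p - aeval (![X 0, X 1, 0, 0] : Fin 4 → MvPolynomial (Fin 4) k) p ∈
      (Ideal.span {X 2, X 3} : Ideal (MvPolynomial (Fin 4) k)) := by
  set I := (Ideal.span {X 2, X 3} : Ideal (MvPolynomial (Fin 4) k)) with hI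
  have h2 : (X 2 : MvPolynomial (Fin 4) k) ∈ I := Ideal.subset_span (by simp)
  have h3 : (X 3 : MvPolynomial (Fin 4) k) ∈ I := Ideal.subset_span (by simp)
  have h : Ideal.Quotient.mkₐ k I =
      (Ideal.Quotient.mkₐ k I).comp
        (aeval (![X 0, X 1, 0, 0] : Fin 4 → MvPolynomial (Fin 4) k)) := by
    apply MvPolynomial.algHom_ext
    intro i
    fin_cases i
    · simp
    · simp
    · simpa using Ideal.Quotient.eq_zero_iff_mem.mpr h2
    · simpa using Ideal.Quotient.eq_zero_iff_mem.mpr h3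
  rw [← Ideal.Quotient.eq]
  exact DFunLike.congr_fun h p

/-- for `f, g ∈ k[z,w]` homogeneous of degree `a+1` with no common zeros
along `Y`, the ideal `(x,y)²·(z,w) + (xg − yf)` equals
`(x², xy, y², xg − yf) ∩ (z,w)`: it is the saturated total ideal of the disjoint union
of the double line `Z` and the line `L = {z = w = 0}`. -/
theorem stmt_14 {k : Type*} [Field k] [IsAlgClosed k] (a : ℕ)
    (f g : MvPolynomial (Fin 4) k)
    (hfzw : f ∈ supported k ({2, 3} : Set (Fin 4)))
    (hgzw : g ∈ supported k ({2, 3} : Set (Fin 4)))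
    (hf : f.IsHomogeneous (a + 1)) (hg : g.IsHomogeneous (a + 1))
    (hfg : NoCommonZerosAlongY f g) :
    (Ideal.span {X 0, X 1} : Ideal (MvPolynomial (Fin 4) k)) ^ 2 * Ideal.span {X 2, X 3}
        + Ideal.span {X 0 * g - X 1 * f}
      = Ideal.span {X 0 ^ 2, X 0 * X 1, X 1 ^ 2, X 0 * g - X 1 * f}
        ⊓ Ideal.span {X 2, X 3} := by
  set I := (Ideal.span {X 2, X 3} : Ideal (MvPolynomial (Fin 4) k)) with hI
  set K := (Ideal.span {X 0, X 1} : Ideal (MvPolynomial (Fin 4) k)) with hK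
  have hfI : f ∈ I := aux_mem_zw a f hfzw hf
  have hgI : g ∈ I := aux_mem_zw a g hgzw hg
  have hqI : X 0 * g - X 1 * f ∈ I := I.sub_mem (I.mul_mem_left _ hgI) (I.mul_mem_left _ hfI)
  have hK0 : (X 0 : MvPolynomial (Fin 4) k) ∈ K := Ideal.subset_span (by simp)
  have hK1 : (X 1 : MvPolynomial (Fin 4) k) ∈ K := Ideal.subset_span (by simp)
  apply le_antisymm
  · rw [Submodule.add_eq_sup]
    refine sup_le (le_inf ?_ Ideal.mul_le_right) ?_
    · refine Ideal.mul_le_left.trans ?_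
      rw [pow_two, hK, Ideal.span_mul_span', Ideal.span_le]
      rintro _ ⟨u, hu, v, hv, rfl⟩
      simp only [Set.mem_insert_iff, Set.mem_singleton_iff] at hu hv
      rcases hu with rfl | rfl <;> rcases hv with rfl | rfl <;>
        exact Ideal.subset_span (by simp [pow_two, mul_comm])
    · rw [Ideal.span_le, Set.singleton_subset_iff]
      exact ⟨Ideal.subset_span (by simp), hqI⟩
  · rintro p ⟨hp, hpI⟩
    simp only [SetLike.mem_coe, Ideal.mem_span_insert, Ideal.mem_span_singleton'] at hp
    obtain ⟨A, _, ⟨B, _, ⟨E, _, ⟨D, rfl⟩, rfl⟩, rfl⟩, rfl⟩ := hp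
    set φ := aeval (R := k) (![X 0, X 1, 0, 0] : Fin 4 → MvPolynomial (Fin 4) k) with hφ
    have hφI : ∀ r ∈ I, φ r = 0 := by
      intro r hr
      have : I ≤ RingHom.ker φ := by
        rw [hI, Ideal.span_le]
        rintro _ (rfl | rfl) <;> simp [RingHom.mem_ker, hφ]
      exact this hr
    have h0 := hφI _ hpI
    have hq0 := hφI _ hqI
    have e0 : φ (X 0) = X 0 := by simp [hφ]
    have e1 : φ (X 1) = X 1 := by simp [hφ]
    rw [map_add, map_add, map_add, map_mul φ D, hq0] at h0
    simp only [map_mul, map_pow, e0, e1] at h0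
    have key : A * X 0 ^ 2 + (B * (X 0 * X 1) + (E * X 1 ^ 2 + D * (X 0 * g - X 1 * f)))
        = (X 0 ^ 2 * (A - φ A) + X 0 * X 1 * (B - φ B) + X 1 ^ 2 * (E - φ E))
          + D * (X 0 * g - X 1 * f) := by
      linear_combination h0
    rw [key, Submodule.add_eq_sup]
    refine Submodule.add_mem_sup ?_ (Ideal.mul_mem_left _ _ (Ideal.subset_span rfl))
    refine add_mem (add_mem ?_ ?_) ?_
    · exact Ideal.mul_mem_mul (Ideal.pow_mem_pow hK0 2) (aux_sub_mem A)
    · exact Ideal.mul_mem_mul (by rw [pow_two]; exact Ideal.mul_mem_mul hK0 hK1) (aux_sub_mem B)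
    · exact Ideal.mul_mem_mul (Ideal.pow_mem_pow hK1 2) (aux_sub_mem E)
end

section
/- Let a ≥ 0 be an integer and let f, g ∈ k[z,w] ⊂ S be homogeneous polynomials of degree a+1 in the variables z, w only, with no common zeros along Y. Set J = ((x,y)²·(z,w)) + (xg − yf). Then for all sufficiently large n, the k-dimension of the degree-n graded component of S/J equals 3n + 3 + a. (Equivalently, the disjoint union W = Z ∪ L of the double line Z with ideal (x², xy, y², xg−yf) and the line L = {z = w = 0} is a curve of degree 3 and arithmetic genus −2−a, the same Hilbert polynomial as a triple line of type (a, −2−3a−g) with g = −2−a... i.e., as predicted by p_a(W) = p_a(Z) − 1.) -/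
open MvPolynomial

namespace Stmt15

/-- exponent vector -/
noncomputable def ex (i j l m : ℕ) : Fin 4 →₀ ℕ := Finsupp.equivFunOnFinite.symm ![i, j, l, m]

lemma ex_self (m : Fin 4 →₀ ℕ) : ex (m 0) (m 1) (m 2) (m 3) = m := by
  ext i; fin_cases i <;> simp [ex]

@[simp] lemma ex_0 (i j l m : ℕ) : ex i j l m 0 = i := by simp [ex]
@[simp] lemma ex_1 (i j l m : ℕ) : ex i j l m 1 = j := by simp [ex]
@[simp] lemma ex_2 (i j l m : ℕ) : ex i j l m 2 = l := by simp [ex]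
@[simp] lemma ex_3 (i j l m : ℕ) : ex i j l m 3 = m := by simp [ex]

lemma ex_inj {i j l m i' j' l' m' : ℕ} :
    ex i j l m = ex i' j' l' m' ↔ i = i' ∧ j = j' ∧ l = l' ∧ m = m' := by
  constructor
  · intro h
    have h0 := DFunLike.congr_fun h 0
    have h1 := DFunLike.congr_fun h 1
    have h2 := DFunLike.congr_fun h 2
    have h3 := DFunLike.congr_fun h 3
    simp at h0 h1 h2 h3
    exact ⟨h0, h1, h2, h3⟩
  · rintro ⟨rfl, rfl, rfl, rfl⟩; rfl

/-- exponents surviving in degree n -/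
noncomputable def B (n : ℕ) : Finset (Fin 4 →₀ ℕ) := by
  classical
  exact ((Finset.range (n+1)).image (fun j => ex 0 0 j (n-j)) ∪
    (Finset.range n).image (fun j => ex 1 0 j (n-1-j))) ∪
    ((Finset.range n).image (fun j => ex 0 1 j (n-1-j)) ∪
    (Finset.range (n+1)).image (fun j => ex j (n-j) 0 0))

lemma mem_B {n : ℕ} (hn : 2 ≤ n) (m : Fin 4 →₀ ℕ) : m ∈ B n ↔
    m 0 + m 1 + m 2 + m 3 = n ∧ (m 0 + m 1 ≤ 1 ∨ m 2 + m 3 = 0) := by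
  rw [← ex_self m]
  simp only [B, Finset.mem_union, Finset.mem_image, Finset.mem_range, ex_inj, ex_0, ex_1, ex_2, ex_3]
  constructor
  · rintro ((⟨j, h⟩ | ⟨j, h⟩) | (⟨j, h⟩ | ⟨j, h⟩)) <;> omega
  · rintro ⟨h, h' | h'⟩
    · rcases Nat.eq_zero_or_pos (m 0) with h0 | h0
      · rcases Nat.eq_zero_or_pos (m 1) with h1 | h1
        · exact Or.inl (Or.inl ⟨m 2, by omega⟩)
        · exact Or.inr (Or.inl ⟨m 2, by omega⟩)
      · exact Or.inl (Or.inr ⟨m 2, by omega⟩)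
    · exact Or.inr (Or.inr ⟨m 0, by omega⟩)

lemma card_B {n : ℕ} (hn : 2 ≤ n) : (B n).card = 4 * n + 2 := by
  classical
  unfold B
  rw [Finset.card_union_of_disjoint, Finset.card_union_of_disjoint, Finset.card_union_of_disjoint,
    Finset.card_image_of_injective, Finset.card_image_of_injective, Finset.card_image_of_injective,
    Finset.card_image_of_injective]
  · simp only [Finset.card_range]; omega
  all_goals first
    | (intro i j h; simp only [ex_inj] at h; omega)
    | (rw [Finset.disjoint_left]
       intro m
       simp only [Finset.mem_union, Finset.mem_image, Finset.mem_range]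
       rintro h1 h2
       rcases h1 with ⟨j, h1, rfl⟩ | ⟨j, h1, rfl⟩ <;> rcases h2 with ⟨i, h2, h⟩ | ⟨i, h2, h⟩ <;>
       simp only [ex_inj] at h <;> omega)
    | (rw [Finset.disjoint_left]
       intro m
       simp only [Finset.mem_image, Finset.mem_range]
       rintro ⟨j, h1, rfl⟩ ⟨i, h2, h⟩
       simp only [ex_inj] at h; omega)

/-- exponents in z, w of degree d -/
noncomputable def E (d : ℕ) : Finset (Fin 4 →₀ ℕ) := by
  classical
  exact (Finset.range (d+1)).image (fun j => ex 0 0 j (d-j))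

lemma mem_E {d : ℕ} (m : Fin 4 →₀ ℕ) : m ∈ E d ↔ m 0 = 0 ∧ m 1 = 0 ∧ m 2 + m 3 = d := by
  rw [← ex_self m]
  simp only [E, Finset.mem_image, Finset.mem_range, ex_inj, ex_0, ex_1, ex_2, ex_3]
  constructor
  · rintro ⟨j, h⟩; omega
  · intro h; exact ⟨m 2, by omega⟩

lemma card_E (d : ℕ) : (E d).card = d + 1 := by
  unfold E
  rw [Finset.card_image_of_injective, Finset.card_range]
  intro i j h; simp only [ex_inj] at h; omega

variable {k : Type*} [Field k]

lemma finrank_restrict (s : Finset (Fin 4 →₀ ℕ)) :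
    Module.finrank k (restrictSupport k (s : Set (Fin 4 →₀ ℕ))) = s.card := by
  rw [Module.finrank_eq_nat_card_basis (basisRestrictSupport k (s : Set (Fin 4 →₀ ℕ)))]
  simp

lemma finite_restrict (s : Finset (Fin 4 →₀ ℕ)) :
    Module.Finite k (restrictSupport k (s : Set (Fin 4 →₀ ℕ))) :=
  Module.Finite.of_basis (basisRestrictSupport k (s : Set (Fin 4 →₀ ℕ)))

lemma mem_restrict (s : Set (Fin 4 →₀ ℕ)) (p : MvPolynomial (Fin 4) k) :
    p ∈ restrictSupport k s ↔ ∀ m, coeff m p ≠ 0 → m ∈ s := by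
  rw [mem_restrictSupport_iff]
  simp [Set.subset_def]

/-- projection -/
noncomputable def P (s : Finset (Fin 4 →₀ ℕ)) : MvPolynomial (Fin 4) k →ₗ[k] MvPolynomial (Fin 4) k :=
  ∑ m ∈ s, (monomial m).comp (lcoeff k m)

lemma coeff_P (s : Finset (Fin 4 →₀ ℕ)) (p : MvPolynomial (Fin 4) k) (m : Fin 4 →₀ ℕ) :
    coeff m (P s p) = if m ∈ s then coeff m p else 0 := by
  classical
  simp [P, LinearMap.sum_apply, coeff_sum, coeff_monomial, lcoeff]

lemma P_eq_self (s : Finset (Fin 4 →₀ ℕ)) (p : MvPolynomial (Fin 4) k)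
    (h : p ∈ restrictSupport k (s : Set (Fin 4 →₀ ℕ))) : P s p = p := by
  rw [mem_restrict] at h
  ext m
  rw [coeff_P]
  split_ifs with hm
  · rfl
  · by_contra h'
    exact hm (h m (Ne.symm h'))

lemma P_eq_zero (s : Finset (Fin 4 →₀ ℕ)) (p : MvPolynomial (Fin 4) k)
    (h : ∀ m ∈ s, coeff m p = 0) : P s p = 0 := by
  ext m
  rw [coeff_P]
  split_ifs with hm
  · simpa using h m hm
  · simp

lemma P_mem (s : Finset (Fin 4 →₀ ℕ)) (p : MvPolynomial (Fin 4) k) :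
    P s p ∈ restrictSupport k (s : Set (Fin 4 →₀ ℕ)) := by
  rw [mem_restrict]
  intro m hm
  rw [coeff_P] at hm
  by_contra h
  exact hm (if_neg h)

lemma mem_pair (i j : Fin 4) (p : MvPolynomial (Fin 4) k) :
    p ∈ (Ideal.span {X i, X j} : Ideal (MvPolynomial (Fin 4) k)) ↔
      ∀ m, coeff m p ≠ 0 → m i ≠ 0 ∨ m j ≠ 0 := by
  have := @mem_ideal_span_X_image (Fin 4) k _ p {i, j}
  rw [Set.image_pair] at this
  rw [this]
  simp

lemma coeff_I (p : MvPolynomial (Fin 4) k)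
    (hp : p ∈ (Ideal.span {X 0, X 1} : Ideal (MvPolynomial (Fin 4) k)) ^ 2 * Ideal.span {X 2, X 3})
    (m : Fin 4 →₀ ℕ) (hm : m 0 + m 1 ≤ 1 ∨ m 2 + m 3 = 0) : coeff m p = 0 := by
  classical
  rcases hm with hm | hm
  · have h1 := Ideal.mul_le_left hp
    rw [pow_two] at h1
    clear hp
    induction h1 using Submodule.mul_induction_on' with
    | mem_mul_mem a ha b hb =>
      rw [coeff_mul]
      refine Finset.sum_eq_zero fun x hx => ?_
      rw [Finset.HasAntidiagonal.mem_antidiagonal] at hx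
      rw [mem_pair] at ha hb
      by_contra h
      have h1 := ha x.1 (left_ne_zero_of_mul h)
      have h2 := hb x.2 (right_ne_zero_of_mul h)
      have e0 := DFunLike.congr_fun hx 0
      have e1 := DFunLike.congr_fun hx 1
      simp only [Finsupp.add_apply] at e0 e1
      omega
    | add a _ b _ ha hb => 
      rw [coeff_add, ha, hb, add_zero]
  · have h1 := Ideal.mul_le_right hp
    rw [mem_pair] at h1
    by_contra h
    have := h1 m h
    omega

lemma monomial_ex (m : Fin 4 →₀ ℕ) (c : k) :
    monomial m c = C c * ((X 0 ^ m 0 * X 1 ^ m 1) * (X 2 ^ m 2 * X 3 ^ m 3)) := by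
  rw [monomial_eq, Finsupp.prod_fintype _ _ (by simp), Fin.prod_univ_four]
  ring

lemma monomial_mem_I (m : Fin 4 →₀ ℕ) (c : k) (h1 : 2 ≤ m 0 + m 1) (h2 : 1 ≤ m 2 + m 3) :
    monomial m c ∈
      (Ideal.span {X 0, X 1} : Ideal (MvPolynomial (Fin 4) k)) ^ 2 * Ideal.span {X 2, X 3} := by
  rw [monomial_ex]
  apply Ideal.mul_mem_left
  have key : ∀ (i j : Fin 4) (s t u : ℕ), u ≤ s + t → (X i ^ s * X j ^ t : MvPolynomial (Fin 4) k) ∈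
      (Ideal.span {X i, X j} : Ideal (MvPolynomial (Fin 4) k)) ^ u := by
    intro i j s t u h
    refine Ideal.pow_le_pow_right h ?_
    rw [pow_add]
    exact Ideal.mul_mem_mul (Ideal.pow_mem_pow (Ideal.subset_span (by simp)) _)
      (Ideal.pow_mem_pow (Ideal.subset_span (by simp)) _)
  refine Ideal.mul_mem_mul (key 0 1 _ _ 2 h1) ?_
  simpa using key 2 3 _ _ 1 h2

lemma supp_coeff (f : MvPolynomial (Fin 4) k) (hf : f ∈ supported k ({2, 3} : Set (Fin 4)))
    (m : Fin 4 →₀ ℕ) (hm : coeff m f ≠ 0) : m 0 = 0 ∧ m 1 = 0 := by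
  rw [mem_supported] at hf
  have : ∀ i, m i ≠ 0 → i = 2 ∨ i = 3 := by
    intro i hi
    have : i ∈ f.vars := (mem_vars_iff_mem_support i).2 ⟨m, by simpa using hm, by simpa using hi⟩
    simpa using hf this
  constructor
  · by_contra h; simpa using this 0 h
  · by_contra h; simpa using this 1 h

lemma wt1 (m : Fin 4 →₀ ℕ) :
    Finsupp.weight (1 : Fin 4 → ℕ) m = m 0 + m 1 + m 2 + m 3 := by
  rw [Finsupp.weight_apply, Finsupp.sum_fintype _ _ (by simp), Fin.sum_univ_four]
  simp

lemma homog_coeff {f : MvPolynomial (Fin 4) k} {n : ℕ} (hf : f.IsHomogeneous n)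
    (m : Fin 4 →₀ ℕ) (hm : coeff m f ≠ 0) : m 0 + m 1 + m 2 + m 3 = n := by
  have := hf hm
  rw [wt1] at this
  exact this

lemma eval_supp (f : MvPolynomial (Fin 4) k) (hf : f ∈ supported k ({2, 3} : Set (Fin 4)))
    (s t c d : k) : eval ![s, t, c, d] f = eval ![0, 0, c, d] f := by
  rw [mem_supported] at hf
  refine eval₂Hom_congr' rfl ?_ rfl
  intro i hi _
  have := hf hi
  simp at this
  rcases this with rfl | rfl <;> simp

lemma wt (m : Fin 4 →₀ ℕ) : Finsupp.weight ![1,1,0,0] m = m 0 + m 1 := by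
  rw [Finsupp.weight_apply, Finsupp.sum_fintype _ _ (by simp), Fin.sum_univ_four]
  simp

lemma wt_supp (f : MvPolynomial (Fin 4) k) (hf : f ∈ supported k ({2, 3} : Set (Fin 4))) :
    IsWeightedHomogeneous ![1,1,0,0] f 0 := by
  intro m hm
  rw [wt]
  have := supp_coeff f hf m hm
  omega

end Stmt15

open Stmt15

/-- for `J = (x,y)²·(z,w) + (xg − yf)`, the Hilbert polynomial of `S/J` is
`3n + 3 + a`: the disjoint union `W = Z ∪ L` of the double line `Z` with ideal
`(x², xy, y², xg−yf)` and the line `L = {z = w = 0}` is a curve of degree `3` and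
arithmetic genus `−2−a`. -/
theorem stmt_15 {k : Type*} [Field k] [IsAlgClosed k] (a : ℕ)
    (f g : MvPolynomial (Fin 4) k)
    (hfzw : f ∈ supported k ({2, 3} : Set (Fin 4)))
    (hgzw : g ∈ supported k ({2, 3} : Set (Fin 4)))
    (hf : f.IsHomogeneous (a + 1)) (hg : g.IsHomogeneous (a + 1))
    (hfg : NoCommonZerosAlongY f g) :
    ∃ N : ℕ, ∀ n : ℕ, N ≤ n →
      (gradedPieceDim k
          ((Ideal.span {X 0, X 1} : Ideal (MvPolynomial (Fin 4) k)) ^ 2 * Ideal.span {X 2, X 3}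
            + Ideal.span {X 0 * g - X 1 * f}) n : ℤ)
        = 3 * n + 3 + a := by
  refine ⟨a + 2, fun n hn => ?_⟩
  obtain ⟨d, rfl⟩ := Nat.exists_eq_add_of_le hn
  have hn2 : 2 ≤ a + 2 + d := by omega
  set n := a + 2 + d with hnd
  set I := (Ideal.span {X 0, X 1} : Ideal (MvPolynomial (Fin 4) k)) ^ 2 * Ideal.span {X 2, X 3}
    with hI
  set q := X 0 * g - X 1 * f with hq
  have hq0 : q ≠ 0 := by
    intro h0
    have h1 : eval ![1, 0, 1, 0] q = 0 := by rw [h0]; simp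
    have h2 : eval ![0, 1, 1, 0] q = 0 := by rw [h0]; simp
    simp [hq, eval_supp g hgzw 1 0] at h1
    simp [hq, eval_supp f hfzw 0 1] at h2
    rcases hfg 1 0 (by simp) with h | h
    · exact h h2
    · exact h h1
  have hqhom : q.IsHomogeneous (a + 2) := by
    have e : a + 2 = 1 + (a + 1) := by ring
    rw [e]
    exact ((isHomogeneous_X k 0).mul hg).sub ((isHomogeneous_X k 1).mul hf)
  have hqwt : IsWeightedHomogeneous ![1,1,0,0] q 1 := by
    have h0 := (isWeightedHomogeneous_X k ![1,1,0,0] (0 : Fin 4)).mul (wt_supp g hgzw)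
    have h1 := (isWeightedHomogeneous_X k ![1,1,0,0] (1 : Fin 4)).mul (wt_supp f hfzw)
    simp only [Matrix.cons_val_zero, Matrix.cons_val_one, add_zero] at h0 h1
    exact h0.sub h1
  have hzw : ∀ f : MvPolynomial (Fin 4) k, f ∈ supported k ({2, 3} : Set (Fin 4)) →
      f.IsHomogeneous (a + 1) → f ∈ (Ideal.span {X 2, X 3} : Ideal (MvPolynomial (Fin 4) k)) := by
    intro f h1 h2
    rw [mem_pair]
    intro m hm
    have := supp_coeff f h1 m hm
    have := homog_coeff h2 m hm
    omega
  have hqI : q ∈ (Ideal.span {X 0, X 1} : Ideal (MvPolynomial (Fin 4) k)) * Ideal.span {X 2, X 3} :=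
    Ideal.sub_mem _ 
      (Ideal.mul_mem_mul (Ideal.subset_span (by simp)) (hzw g hgzw hg))
      (Ideal.mul_mem_mul (Ideal.subset_span (by simp)) (hzw f hfzw hf))
  set U := restrictSupport k (B n : Set (Fin 4 →₀ ℕ)) with hU
  set R := restrictSupport k (E d : Set (Fin 4 →₀ ℕ)) with hR
  set W := R.map (LinearMap.mulRight k q) with hW
  set π := (Ideal.Quotient.mkₐ k (I + Ideal.span {q})).toLinearMap with hπ
  have hπ0 : ∀ p, π p = 0 ↔ p ∈ I + Ideal.span {q} := fun p => Ideal.Quotient.eq_zero_iff_mem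
  -- products of zw-monomials with q
  have hRU : ∀ h ∈ R, h * q ∈ U := by
    intro h hh
    rw [hR, mem_restrict] at hh
    rw [hU, mem_restrict]
    intro m hm
    have hh1 : h.IsHomogeneous d := by
      intro m hm
      have := (mem_E m).1 (hh m hm)
      rw [wt1]
      omega
    have hh2 : IsWeightedHomogeneous ![1,1,0,0] h 0 := by
      intro m hm
      have := (mem_E m).1 (hh m hm)
      rw [wt]; omega
    have h1 := homog_coeff (hh1.mul hqhom) m hm
    have h2 := (hh2.mul hqwt) hm
    rw [wt] at h2
    exact (mem_B hn2 m).2 (by omega)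
  have hPJ : ∀ p ∈ I + Ideal.span {q}, P (B n) p ∈ W := by
    intro p hp
    obtain ⟨i, hi, r, hr, rfl⟩ := Submodule.mem_sup.1 hp
    obtain ⟨h, rfl⟩ := Ideal.mem_span_singleton'.1 hr
    have hPI : ∀ i ∈ I, P (B n) i = 0 := fun i hi =>
      P_eq_zero _ _ fun m hm => coeff_I i hi m ((mem_B hn2 m).1 hm).2
    rw [map_add, hPI i hi, zero_add]
    clear hp hr hi
    induction h using MvPolynomial.induction_on' with
    | add p1 p2 h1 h2 => rw [add_mul, map_add]; exact W.add_mem h1 h2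
    | monomial m c =>
      by_cases h01 : m 0 = 0 ∧ m 1 = 0
      · by_cases hd : m 2 + m 3 = d
        · have hm : monomial m c ∈ R :=
            (monomial_mem_restrictSupport k).2 (Or.inl ((mem_E m).2 ⟨h01.1, h01.2, hd⟩))
          rw [P_eq_self _ _ (hRU _ hm)]
          exact ⟨_, hm, rfl⟩
        · rw [P_eq_zero]
          · exact W.zero_mem
          · intro m' hm'
            by_contra hc
            have hmh : (monomial m c).IsHomogeneous (m 2 + m 3) := by
              apply isHomogeneous_monomial
              rw [Finsupp.degree_eq_sum, Fin.sum_univ_four]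
              omega
            have := homog_coeff (hmh.mul hqhom) m' hc
            have := ((mem_B hn2 m').1 hm').1
            omega
      · rw [hPI]
        · exact W.zero_mem
        · rw [hI, pow_two, mul_assoc]
          refine Ideal.mul_mem_mul ?_ hqI
          rw [mem_pair]
          intro m' hm'
          rw [coeff_monomial] at hm'
          split_ifs at hm' with e
          · subst e; omega
          · exact absurd rfl hm'
  have hmap : (homogeneousSubmodule (Fin 4) k n).map π = U.map π := by
    apply le_antisymm
    · rintro _ ⟨p, hp, rfl⟩
      refine ⟨P (B n) p, P_mem _ _, ?_⟩
      rw [← sub_eq_zero, ← map_sub, hπ0]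
      refine Submodule.mem_sup_left ?_
      rw [(P (B n) p - p).as_sum]
      refine Ideal.sum_mem _ fun m hm => ?_
      rw [mem_support_iff, coeff_sub, coeff_P] at hm
      by_cases hmB : m ∈ B n
      · simp [hmB] at hm
      · have hc : coeff m p ≠ 0 := by simpa [hmB] using hm
        have := homog_coeff hp m hc
        rw [mem_B hn2] at hmB
        exact monomial_mem_I _ _ (by omega) (by omega)
    · apply Submodule.map_mono
      intro p hp
      rw [hU, mem_restrict] at hp
      intro m hm
      have := (mem_B hn2 m).1 (hp m hm)
      rw [wt1]
      exact this.1
  have hWfin : Module.finrank k W = d + 1 := by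
    rw [hW, ← (Submodule.equivMapOfInjective _ (fun _ _ h => mul_right_cancel₀ hq0 h) R).finrank_eq,
      hR, finrank_restrict, card_E]
  have hker : Module.finrank k (LinearMap.ker (π.domRestrict U)) = Module.finrank k W := by
    have : (LinearMap.ker (π.domRestrict U)).map U.subtype = W := by
      ext p
      constructor
      · rintro ⟨⟨p, hp⟩, h, rfl⟩
        have h' : π p = 0 := h
        rw [hπ0] at h'
        have := hPJ p h'
        rwa [P_eq_self _ _ hp] at this
      · rintro ⟨h, hh, rfl⟩
        refine ⟨⟨h * q, hRU h hh⟩, ?_, rfl⟩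
        change π (h * q) = 0
        rw [hπ0]
        exact Submodule.mem_sup_right (Ideal.mem_span_singleton'.2 ⟨h, rfl⟩)
    rw [← this]
    exact (LinearEquiv.finrank_eq (Submodule.equivMapOfInjective _ U.injective_subtype _))
  have hfin : Module.Finite k U := finite_restrict _
  have h1 := (π.domRestrict U).finrank_range_add_finrank_ker
  rw [LinearMap.range_domRestrict, hker, hWfin, hU, finrank_restrict, card_B hn2, ← hU] at h1
  unfold gradedPieceDim
  rw [← hπ, hmap]
  omega
end

section
/- Let a, b ≥ 0 be integers and let J ⊂ S be the ideal generated by x³, x²y, xy², y³, x·y·z^{a+1}, x²·w^{a+b}, x·y·w^{2a+b+1}, and x·z^{3a+b+3} − y²·w^{3a+b+2}. Then there exists an integer N ≥ 0 such that (x², xy, y³, x·z^{3a+b+3} − y²·w^{3a+b+2})·(x,y,z,w)^N ⊆ J. (In other words, the saturation of J with respect to the irrelevant ideal (x,y,z,w) contains the ideal (x², xy, y³, xz^{3a+b+3} − y²w^{3a+b+2}), the total ideal of an extremal triple line of type (−1, 3a+b+3); this is the key computation showing that a flat family of triple lines of type (a,b) degenerates to a triple line of type (−1, 3a+b+3).)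 -/
open MvPolynomial

/-- Over any commutative ring: each of the variables has a power in the colon ideal. -/
lemma stmt_16_aux {R : Type*} [CommRing R] (x y z w : R) (a b : ℕ) :
    ∃ N : ℕ,
      (Ideal.span {x ^ 2, x * y, y ^ 3,
          x * z ^ (3 * a + b + 3) - y ^ 2 * w ^ (3 * a + b + 2)} : Ideal R)
        * (Ideal.span {x, y, z, w} : Ideal R) ^ N
      ≤ Ideal.span {x ^ 3, x ^ 2 * y, x * y ^ 2, y ^ 3,
          x * y * z ^ (a + 1), x ^ 2 * w ^ (a + b),
          x * y * w ^ (2 * a + b + 1),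
          x * z ^ (3 * a + b + 3) - y ^ 2 * w ^ (3 * a + b + 2)} := by
  set J : Ideal R := Ideal.span {x ^ 3, x ^ 2 * y, x * y ^ 2, y ^ 3,
          x * y * z ^ (a + 1), x ^ 2 * w ^ (a + b),
          x * y * w ^ (2 * a + b + 1),
          x * z ^ (3 * a + b + 3) - y ^ 2 * w ^ (3 * a + b + 2)} with hJ
  have h1 : x ^ 3 ∈ J := Ideal.subset_span (by simp)
  have h2 : x ^ 2 * y ∈ J := Ideal.subset_span (by simp)
  have h3 : x * y ^ 2 ∈ J := Ideal.subset_span (by simp)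
  have h4 : y ^ 3 ∈ J := Ideal.subset_span (by simp)
  have h5 : x * y * z ^ (a + 1) ∈ J := Ideal.subset_span (by simp)
  have h6 : x ^ 2 * w ^ (a + b) ∈ J := Ideal.subset_span (by simp)
  have h7 : x * y * w ^ (2 * a + b + 1) ∈ J := Ideal.subset_span (by simp)
  have h8 : x * z ^ (3 * a + b + 3) - y ^ 2 * w ^ (3 * a + b + 2) ∈ J :=
    Ideal.subset_span (by simp)
  clear_value J
  set I : Ideal R := Ideal.span {x ^ 2, x * y, y ^ 3,
          x * z ^ (3 * a + b + 3) - y ^ 2 * w ^ (3 * a + b + 2)} with hI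
  -- a criterion for multiplying `I` into `J`
  have key : ∀ v : R, x ^ 2 * v ∈ J → x * y * v ∈ J → ∀ p ∈ I, p * v ∈ J := by
    intro v hv1 hv2 p hp
    have hle : I ≤ Submodule.comap (LinearMap.mulRight R v) J := by
      rw [hI]
      refine Submodule.span_le.2 ?_
      rintro q (rfl | rfl | rfl | rfl)
      · exact hv1
      · exact hv2
      · exact J.mul_mem_right v h4
      · exact J.mul_mem_right v h8
    exact hle hp
  let C : Ideal R :=
    { carrier := {v | ∀ p ∈ I, p * v ∈ J}
      add_mem' := fun {u v} hu hv p hp => by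
        rw [mul_add]; exact J.add_mem (hu p hp) (hv p hp)
      zero_mem' := fun p _ => by simp
      smul_mem' := fun c v hv p hp => by
        have := J.mul_mem_left c (hv p hp)
        rw [smul_eq_mul, mul_left_comm]; exact this }
  have hrad : (Ideal.span {x, y, z, w} : Ideal R) ≤ C.radical := by
    refine Ideal.span_le.2 ?_
    rintro q (rfl | rfl | rfl | rfl)
    · refine ⟨1, key _ ?_ ?_⟩
      · convert h1 using 1; ring
      · convert h2 using 1; ring
    · refine ⟨1, key _ ?_ ?_⟩
      · convert h2 using 1; ring
      · convert h3 using 1; ring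
    · refine ⟨3 * a + b + 3, key _ ?_ ?_⟩
      · convert J.add_mem (J.mul_mem_left x h8)
          (J.mul_mem_right (w ^ (3 * a + b + 2)) h3) using 1
        ring
      · convert J.mul_mem_right (q ^ (2 * a + b + 2)) h5 using 1
        ring
    · refine ⟨2 * a + b + 1, key _ ?_ ?_⟩
      · convert J.mul_mem_right (q ^ (a + 1)) h6 using 1
        ring
      · exact h7
  have hfg : (Ideal.span {x, y, z, w} : Ideal R).FG :=
    Submodule.fg_span (Set.toFinite _)
  obtain ⟨N, hN⟩ := Ideal.exists_pow_le_of_le_radical_of_fg hrad hfg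
  exact ⟨N, Ideal.mul_le.2 fun p hp v hv => hN hv p hp⟩

/-- for `a, b ≥ 0`, the saturation with respect to the irrelevant ideal
`M = (x,y,z,w)` of the ideal
`J = (x³, x²y, xy², y³, xyz^{a+1}, x²w^{a+b}, xyw^{2a+b+1}, xz^{3a+b+3} − y²w^{3a+b+2})`
contains the ideal `(x², xy, y³, xz^{3a+b+3} − y²w^{3a+b+2})`, the total ideal of an
extremal triple line of type `(−1, 3a+b+3)`. -/
theorem stmt_16 {k : Type*} [Field k] [IsAlgClosed k] (a b : ℕ) :
    ∃ N : ℕ,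
      (Ideal.span {X 0 ^ 2, X 0 * X 1, X 1 ^ 3,
          X 0 * X 2 ^ (3 * a + b + 3) - X 1 ^ 2 * X 3 ^ (3 * a + b + 2)} :
        Ideal (MvPolynomial (Fin 4) k))
        * (Ideal.span {X 0, X 1, X 2, X 3} : Ideal (MvPolynomial (Fin 4) k)) ^ N
      ≤ Ideal.span {X 0 ^ 3, X 0 ^ 2 * X 1, X 0 * X 1 ^ 2, X 1 ^ 3,
          X 0 * X 1 * X 2 ^ (a + 1), X 0 ^ 2 * X 3 ^ (a + b),
          X 0 * X 1 * X 3 ^ (2 * a + b + 1),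
          X 0 * X 2 ^ (3 * a + b + 3) - X 1 ^ 2 * X 3 ^ (3 * a + b + 2)} := by
  exact stmt_16_aux _ _ _ _ a b
end

section
/- Let q ∈ S be a homogeneous polynomial of degree 1 with q ∉ (x,y), and let f, g ∈ S be homogeneous of degree 1 with no common zeros along Y. Set I_V = (x², xy, xq − y²), the saturated ideal of a quasiprimitive triple line V of type (−1,1) on Y. Then there is an S-module homomorphism u : I_V → S/(x,y) satisfying u(x²) = 0, u(xy) = f + (x,y), and u(xq − y²) = g + (x,y), and the kernel of u is exactly the ideal (x², xy², xyq − y³, g·xy − f·(xq − y²)). (This kernel is the saturated ideal of a multiplicity-four structure Z₂ on the line Y of arithmetic genus 0, lying in the non-extremal component of H(4,0).) -/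
open MvPolynomial

namespace Stmt19

/-- Restriction to the line `x = y = 0`. -/
noncomputable def phi (k : Type*) [Field k] :
    MvPolynomial (Fin 4) k →ₐ[k] MvPolynomial (Fin 4) k :=
  MvPolynomial.aeval ![0, 0, MvPolynomial.X 2, MvPolynomial.X 3]

variable {k : Type*} [Field k]

lemma phi_X0 : phi k (X 0) = 0 := by simp [phi]
lemma phi_X1 : phi k (X 1) = 0 := by simp [phi]
lemma phi_X2 : phi k (X 2) = X 2 := by simp [phi]
lemma phi_X3 : phi k (X 3) = X 3 := by simp [phi]

lemma mk_phi (p : MvPolynomial (Fin 4) k) :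
    Ideal.Quotient.mk (Ideal.span {X 0, X 1} : Ideal (MvPolynomial (Fin 4) k)) (phi k p) =
      Ideal.Quotient.mk _ p := by
  have h : (Ideal.Quotient.mkₐ k
      (Ideal.span {X 0, X 1} : Ideal (MvPolynomial (Fin 4) k))).comp (phi k) =
      Ideal.Quotient.mkₐ k _ := by
    apply MvPolynomial.algHom_ext
    intro i
    fin_cases i
    · simp only [AlgHom.comp_apply, Ideal.Quotient.mkₐ_eq_mk]
      refine (congrArg _ phi_X0).trans ?_
      rw [map_zero]
      exact (Ideal.Quotient.eq_zero_iff_mem.2 (Ideal.subset_span (by simp))).symm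
    · simp only [AlgHom.comp_apply, Ideal.Quotient.mkₐ_eq_mk]
      refine (congrArg _ phi_X1).trans ?_
      rw [map_zero]
      exact (Ideal.Quotient.eq_zero_iff_mem.2 (Ideal.subset_span (by simp))).symm
    · exact congrArg _ phi_X2
    · exact congrArg _ phi_X3
  exact DFunLike.congr_fun h p

lemma mem_iff (p : MvPolynomial (Fin 4) k) :
    p ∈ (Ideal.span {X 0, X 1} : Ideal (MvPolynomial (Fin 4) k)) ↔ phi k p = 0 := by
  constructor
  · intro h
    obtain ⟨a, b, rfl⟩ := Ideal.mem_span_pair.1 h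
    simp [phi_X0, phi_X1]
  · intro h
    rw [← Ideal.Quotient.eq_zero_iff_mem, ← mk_phi, h, map_zero]

lemma phi_phi (p : MvPolynomial (Fin 4) k) : phi k (phi k p) = phi k p := by
  have := (mem_iff (phi k p - p)).1 (by
    rw [← Ideal.Quotient.eq_zero_iff_mem, map_sub, mk_phi, sub_self])
  rwa [map_sub, sub_eq_zero] at this

lemma eval_phi (c d : k) (p : MvPolynomial (Fin 4) k) :
    eval ![0, 0, c, d] (phi k p) = eval ![0, 0, c, d] p := by
  have h := (mem_iff (phi k p - p)).2 (by rw [map_sub, phi_phi, sub_self])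
  obtain ⟨a, b, h⟩ := Ideal.mem_span_pair.1 h
  have := congrArg (eval ![0, 0, c, d]) h
  simp at this
  exact (sub_eq_zero.1 this.symm)

lemma syz (q a b c : MvPolynomial (Fin 4) k)
    (h : a * X 0 ^ 2 + b * (X 0 * X 1) + c * (X 0 * q - X 1 ^ 2) = 0) :
    phi k b = 0 ∧ phi k c = 0 := by
  have hp : Prime (X 0 : MvPolynomial (Fin 4) k) := X_prime
  have h01 : ¬ (X 0 : MvPolynomial (Fin 4) k) ∣ X 1 := by
    rw [X_dvd_X]; decide
  have h1 : (X 0 : MvPolynomial (Fin 4) k) ∣ c := by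
    have : (X 0 : MvPolynomial (Fin 4) k) ∣ c * X 1 ^ 2 :=
      ⟨a * X 0 + b * X 1 + c * q, by linear_combination -h⟩
    exact (hp.dvd_or_dvd this).resolve_right fun h => h01 (hp.dvd_of_dvd_pow h)
  obtain ⟨c', rfl⟩ := h1
  have h2 : a * X 0 + b * X 1 + c' * (X 0 * q - X 1 ^ 2) = 0 := by
    apply mul_left_cancel₀ hp.ne_zero
    linear_combination h
  have h3 : (X 0 : MvPolynomial (Fin 4) k) ∣ b - c' * X 1 := by
    have : (X 0 : MvPolynomial (Fin 4) k) ∣ (b - c' * X 1) * X 1 :=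
      ⟨-(a + c' * q), by linear_combination h2⟩
    exact (hp.dvd_or_dvd this).resolve_right h01
  obtain ⟨e, he⟩ := h3
  have hb : b = X 0 * e + c' * X 1 := by linear_combination he
  subst hb
  simp [phi_X0, phi_X1]

lemma phi_linear (f : MvPolynomial (Fin 4) k) (hf : f.IsHomogeneous 1) :
    ∃ a b : k, phi k f = C a * X 2 + C b * X 3 := by
  have h : f ∈ Submodule.span k (Set.range (X : Fin 4 → MvPolynomial (Fin 4) k)) := by
    rw [← homogeneousSubmodule_one_eq_span_X]; exact hf
  clear hf
  induction h using Submodule.span_induction with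
  | mem x h =>
    obtain ⟨i, rfl⟩ := h
    fin_cases i
    · exact ⟨0, 0, by simp [phi]⟩
    · exact ⟨0, 0, by simp [phi]⟩
    · exact ⟨1, 0, by simp [phi]⟩
    · exact ⟨0, 1, by simp [phi]⟩
  | zero => exact ⟨0, 0, by simp⟩
  | add x y _ _ hx hy =>
    obtain ⟨a, b, h⟩ := hx
    obtain ⟨a', b', h'⟩ := hy
    exact ⟨a + a', b + b', by rw [map_add, h, h']; simp only [map_add]; ring⟩
  | smul r x _ hx =>
    obtain ⟨a, b, h⟩ := hx
    exact ⟨r * a, r * b, by rw [map_smul, h, smul_eq_C_mul]; simp only [map_mul]; ring⟩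

lemma phi_hom (f : MvPolynomial (Fin 4) k) (hf : f.IsHomogeneous 1) :
    (phi k f).IsHomogeneous 1 := by
  obtain ⟨a, b, h⟩ := phi_linear f hf
  rw [h]
  exact (isHomogeneous_C_mul_X a 2).add (isHomogeneous_C_mul_X b 3)

/-- Every linear form has a zero on the line. -/
lemma exists_zero (f : MvPolynomial (Fin 4) k) (hf : f.IsHomogeneous 1) :
    ∃ c d : k, (c, d) ≠ (0, 0) ∧ eval ![0, 0, c, d] f = 0 := by
  obtain ⟨a, b, h⟩ := phi_linear f hf
  by_cases hab : a = 0 ∧ b = 0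
  · refine ⟨1, 0, by simp, ?_⟩
    rw [← eval_phi, h]; simp [hab.1]
  · refine ⟨b, -a, ?_, ?_⟩
    · simp only [ne_eq, Prod.mk.injEq, neg_eq_zero]; tauto
    · rw [← eval_phi, h]; simp; ring

lemma coprime_rel (f g b c : MvPolynomial (Fin 4) k)
    (hf : f.IsHomogeneous 1) (hg : g.IsHomogeneous 1)
    (hfg : NoCommonZerosAlongY f g) (h : phi k (b * f + c * g) = 0) :
    ∃ r, phi k b = phi k (r * g) ∧ phi k c = - phi k (r * f) := by
  have hf0 : phi k f ≠ 0 := by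
    intro h0
    obtain ⟨s, t, hst, hz⟩ := exists_zero g hg
    rcases hfg s t hst with h1 | h1
    · apply h1; rw [← eval_phi, h0, map_zero]
    · exact h1 hz
  have hirr : Irreducible (phi k f) := by
    apply irreducible_of_totalDegree_eq_one ((phi_hom f hf).totalDegree hf0)
    intro x hx
    obtain ⟨i, hi⟩ := exists_coeff_ne_zero hf0
    rw [isUnit_iff_ne_zero]
    rintro rfl
    exact hi (zero_dvd_iff.1 (hx i))
  have hpr : Prime (phi k f) := hirr.prime
  have hng : ¬ phi k f ∣ phi k g := by
    rintro ⟨r, hr⟩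
    obtain ⟨s, t, hst, hz⟩ := exists_zero f hf
    rcases hfg s t hst with h1 | h1
    · exact h1 hz
    · apply h1; rw [← eval_phi, hr, map_mul, eval_phi, hz, zero_mul]
  rw [map_add, map_mul, map_mul] at h
  have hd : phi k f ∣ phi k c * phi k g := ⟨-phi k b, by linear_combination h⟩
  obtain ⟨r, hr⟩ := (hpr.dvd_or_dvd hd).resolve_right hng
  have hb : phi k b = - r * phi k g := by
    apply mul_left_cancel₀ hf0
    rw [hr] at h
    linear_combination h
  refine ⟨-r, ?_, ?_⟩
  · rw [← phi_phi b, hb, map_mul, map_mul, phi_phi]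
  · rw [← phi_phi c, hr, map_mul, map_mul, phi_phi, map_neg]; ring

end Stmt19

/-- with `I_V = (x², xy, xq − y²)` the ideal of a quasiprimitive triple
line of type `(−1,1)` (where `q` is linear, `q ∉ (x,y)`), and `f, g` linear forms with
no common zeros along `Y`, there is an `S`-module homomorphism `u : I_V → S/(x,y)` with
`u(x²) = 0`, `u(xy) = f̄`, `u(xq − y²) = ḡ`, whose kernel is exactly the ideal
`(x², xy², xyq − y³, g·xy − f·(xq − y²))`, the saturated ideal of a multiplicity-four
structure `Z₂` of genus `0` in the non-extremal component of `H(4,0)`. -/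
theorem stmt_19 {k : Type*} [Field k] [IsAlgClosed k]
    (q f g : MvPolynomial (Fin 4) k)
    (hq : q.IsHomogeneous 1)
    (hqY : q ∉ (Ideal.span {X 0, X 1} : Ideal (MvPolynomial (Fin 4) k)))
    (hf : f.IsHomogeneous 1) (hg : g.IsHomogeneous 1)
    (hfg : NoCommonZerosAlongY f g) :
    ∃ u : (Ideal.span {X 0 ^ 2, X 0 * X 1, X 0 * q - X 1 ^ 2} :
          Ideal (MvPolynomial (Fin 4) k)) →ₗ[MvPolynomial (Fin 4) k]
        (MvPolynomial (Fin 4) k ⧸ (Ideal.span {X 0, X 1} : Ideal (MvPolynomial (Fin 4) k))),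
      u ⟨X 0 ^ 2, Ideal.subset_span (by simp)⟩ = 0 ∧
      u ⟨X 0 * X 1, Ideal.subset_span (by simp)⟩ = Ideal.Quotient.mk _ f ∧
      u ⟨X 0 * q - X 1 ^ 2, Ideal.subset_span (by simp)⟩ = Ideal.Quotient.mk _ g ∧
      LinearMap.ker u = Submodule.comap
        (Submodule.subtype (Ideal.span {X 0 ^ 2, X 0 * X 1, X 0 * q - X 1 ^ 2} :
          Ideal (MvPolynomial (Fin 4) k)))
        (Ideal.span {X 0 ^ 2, X 0 * X 1 ^ 2, X 0 * X 1 * q - X 1 ^ 3,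
          g * (X 0 * X 1) - f * (X 0 * q - X 1 ^ 2)}) := by
  classical
  set I : Ideal (MvPolynomial (Fin 4) k) :=
    Ideal.span {X 0 ^ 2, X 0 * X 1, X 0 * q - X 1 ^ 2} with hI
  have hrep : ∀ v : I, ∃ a b c : MvPolynomial (Fin 4) k,
      a * X 0 ^ 2 + b * (X 0 * X 1) + c * (X 0 * q - X 1 ^ 2) = (v : MvPolynomial (Fin 4) k) := by
    intro v
    obtain ⟨a, b, c, h⟩ := Submodule.mem_span_triple.1 v.2
    exact ⟨a, b, c, by simpa [smul_eq_mul] using h⟩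
  choose A B D hABD using hrep
  have key : ∀ (v : I) (a b c : MvPolynomial (Fin 4) k),
      a * X 0 ^ 2 + b * (X 0 * X 1) + c * (X 0 * q - X 1 ^ 2) = (v : MvPolynomial (Fin 4) k) →
      Ideal.Quotient.mk (Ideal.span {X 0, X 1} : Ideal (MvPolynomial (Fin 4) k))
        (B v * f + D v * g) = Ideal.Quotient.mk _ (b * f + c * g) := by
    intro v a b c h
    have h2 := hABD v
    obtain ⟨hb, hc⟩ := Stmt19.syz q (A v - a) (B v - b) (D v - c)
      (by linear_combination h2 - h)
    rw [Ideal.Quotient.eq, Stmt19.mem_iff]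
    have : B v * f + D v * g - (b * f + c * g) = (B v - b) * f + (D v - c) * g := by ring
    rw [this, map_add, map_mul, map_mul, hb, hc]
    ring
  let u : I →ₗ[MvPolynomial (Fin 4) k]
      (MvPolynomial (Fin 4) k ⧸ (Ideal.span {X 0, X 1} : Ideal (MvPolynomial (Fin 4) k))) :=
    { toFun := fun v => Ideal.Quotient.mk _ (B v * f + D v * g)
      map_add' := by
        intro v w
        have hv := hABD v
        have hw := hABD w
        rw [key (v + w) (A v + A w) (B v + B w) (D v + D w)
          (by push_cast; linear_combination hv + hw), ← map_add]
        congr 1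
        ring
      map_smul' := by
        intro r v
        have hv := hABD v
        rw [key (r • v) (r * A v) (r * B v) (r * D v)
          (by push_cast; rw [smul_eq_mul]; linear_combination r * hv), RingHom.id_apply]
        change _ = Ideal.Quotient.mk _ (r * (B v * f + D v * g))
        congr 1
        ring }
  have hu : ∀ (v : I) (a b c : MvPolynomial (Fin 4) k),
      a * X 0 ^ 2 + b * (X 0 * X 1) + c * (X 0 * q - X 1 ^ 2) = (v : MvPolynomial (Fin 4) k) →
      u v = Ideal.Quotient.mk _ (b * f + c * g) := key
  refine ⟨u, ?_, ?_, ?_, ?_⟩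
  · rw [hu _ 1 0 0 (by simp)]; simp
  · rw [hu _ 0 1 0 (by simp)]; simp
  · rw [hu _ 0 0 1 (by simp)]; simp
  · ext v
    rw [LinearMap.mem_ker, Submodule.mem_comap, Submodule.subtype_apply]
    constructor
    · intro h
      have hv := hABD v
      rw [hu v _ _ _ hv, Ideal.Quotient.eq_zero_iff_mem, Stmt19.mem_iff] at h
      obtain ⟨r, hb, hc⟩ := Stmt19.coprime_rel f g _ _ hf hg hfg h
      have hb' := (Stmt19.mem_iff (B v - r * g)).2 (by rw [map_sub, hb, sub_self])
      have hc' := (Stmt19.mem_iff (D v + r * f)).2 (by rw [map_add, hc]; ring)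
      obtain ⟨s, t, hst⟩ := Ideal.mem_span_pair.1 hb'
      obtain ⟨s', t', hst'⟩ := Ideal.mem_span_pair.1 hc'
      rw [Ideal.mem_span_insert]
      refine ⟨A v + s * X 1 + s' * q, _, Submodule.mem_span_triple.2 ⟨t - s', t', r, rfl⟩, ?_⟩
      simp only [smul_eq_mul]
      linear_combination -hv - (X 0 * X 1) * hst - (X 0 * q - X 1 ^ 2) * hst'
    · intro h
      rw [Ideal.mem_span_insert] at h
      obtain ⟨a, z, hz, hv⟩ := h
      obtain ⟨b, c, d, rfl⟩ := Submodule.mem_span_triple.1 hz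
      simp only [smul_eq_mul] at hv
      rw [hu v a (b * X 1 + d * g) (c * X 1 - d * f) (by rw [hv]; ring),
        Ideal.Quotient.eq_zero_iff_mem, Stmt19.mem_iff]
      have : (b * X 1 + d * g) * f + (c * X 1 - d * f) * g = X 1 * (b * f + c * g) := by ring
      rw [this, map_mul, Stmt19.phi_X1, zero_mul]
end
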